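/- Let C be a clutter and let I = I(C) ⊆ R be its edge ideal. If C is unmixed and has the max-flow min-cut property, then: (a) depth(R/I^k) ≥ depth(R/I^{k+1}) for all k ≥ 1; (b) reg(R/I^k) ≤ reg(R/I^{k+1}) for all k ≥ 1. -/

import Mathlib

open MvPolynomial CategoryTheory Opposite

noncomputable section

/-- The polynomial ring `K[x_v : v ∈ σ]` over the field `K`. -/
abbrev MvPoly (K : Type) [Field K] (σ : Type) : Type := MvPolynomial σ K

variable (K : Type) [Field K] (σ : Type)

/-- The graded maximal ideal `m = (x_v : v ∈ σ)` generated by all the variables. -/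
def maxIdeal : Ideal (MvPoly K σ) := Ideal.span (Set.range MvPolynomial.X)

/-- The depth of `R/I` with respect to the graded maximal ideal, defined as
`inf { i | Ext^i(R/m, R/I) ≠ 0 }` (with value `⊤` for the zero module). -/
def depthQ (I : Ideal (MvPoly K σ)) : ℕ∞ :=
  sInf { d : ℕ∞ | ∃ i : ℕ, d = i ∧
    Nontrivial (((Ext (MvPoly K σ) (ModuleCat (MvPoly K σ)) i).obj
      (op (ModuleCat.of (MvPoly K σ) (MvPoly K σ ⧸ maxIdeal K σ)))).obj
      (ModuleCat.of (MvPoly K σ) (MvPoly K σ ⧸ I))) }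

/-- The degree-`e` homogeneous component condition, for an integer `e`
(for `e < 0` the component is zero). -/
def HomogComp (e : ℤ) (p : MvPoly K σ) : Prop :=
  if 0 ≤ e then p ∈ homogeneousSubmodule σ K e.toNat else p = 0

/-- `v` is a homogeneous element of degree `e` of the graded free module
`⊕_j R(-dg j)`. -/
def IsHomogVec {m : ℕ} (dg : Fin m → ℤ) (e : ℤ) (v : Fin m → MvPoly K σ) : Prop :=
  ∀ j, HomogComp K σ (e - dg j) (v j)

/-- The degree-`e` homogeneous component of `R/I`. -/
def QuotComp (I : Ideal (MvPoly K σ)) (e : ℤ) : Submodule K (MvPoly K σ ⧸ I) :=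
  if 0 ≤ e then
    Submodule.map (Ideal.Quotient.mkₐ K I).toLinearMap (homogeneousSubmodule σ K e.toNat)
  else ⊥

/-- A graded free resolution of `R/I` by finitely generated graded free modules
`F i = ⊕_{j < rk i} R(-dg i j)`, with degree preserving (degree zero) maps. -/
structure GradedFreeRes (I : Ideal (MvPoly K σ)) where
  rk : ℕ → ℕ
  dg : (i : ℕ) → Fin (rk i) → ℤ
  dmap : (i : ℕ) → ((Fin (rk (i + 1)) → MvPoly K σ) →ₗ[MvPoly K σ] (Fin (rk i) → MvPoly K σ))
  aug : (Fin (rk 0) → MvPoly K σ) →ₗ[MvPoly K σ] (MvPoly K σ ⧸ I)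
  aug_surj : Function.Surjective aug
  exact0 : Function.Exact (dmap 0) aug
  exactS : ∀ i, Function.Exact (dmap (i + 1)) (dmap i)
  graded : ∀ i (e : ℤ) v, IsHomogVec K σ (dg (i + 1)) e v → IsHomogVec K σ (dg i) e (dmap i v)
  aug_graded : ∀ (e : ℤ) v, IsHomogVec K σ (dg 0) e v → aug v ∈ QuotComp K σ I e

/-- `R/I` admits a graded free resolution all of whose twists `dg i j` satisfy
`dg i j - i ≤ r`. -/
def ResBound (I : Ideal (MvPoly K σ)) (r : ℤ) : Prop :=
  ∃ F : GradedFreeRes K σ I, ∀ i j, F.dg i j - i ≤ r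

open Classical in
/-- The Castelnuovo–Mumford regularity of `R/I`: the least `r` bounding the twists of
a graded free resolution of `R/I` (with the convention `⊥ = -∞` for the zero module). -/
def CMreg (I : Ideal (MvPoly K σ)) : WithBot ℤ :=
  if h : ∃ r : ℤ, ResBound K σ I r ∧ ∀ s : ℤ, ResBound K σ I s → r ≤ s
  then ((h.choose : ℤ) : WithBot ℤ) else ⊥

variable {n : ℕ}

/-- The monomial `x^a`. -/
def mono (K : Type) [Field K] {n : ℕ} (a : Fin n →₀ ℕ) : MvPoly K (Fin n) :=
  MvPolynomial.monomial a 1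

/-- A monomial ideal: an ideal generated by monomials. -/
def IsMonomialIdeal (I : Ideal (MvPoly K (Fin n))) : Prop :=
  ∃ S : Set (Fin n →₀ ℕ), I = Ideal.span (mono K '' S)

/-- A squarefree exponent vector. -/
def SqfreeExp (a : Fin n →₀ ℕ) : Prop := ∀ i, a i ≤ 1

/-- A squarefree monomial ideal: an ideal generated by squarefree monomials. -/
def IsSqfreeMonomialIdeal (I : Ideal (MvPoly K (Fin n))) : Prop :=
  ∃ S : Set (Fin n →₀ ℕ), (∀ a ∈ S, SqfreeExp a) ∧ I = Ideal.span (mono K '' S)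

/-- A clutter on the vertex set `Fin n`: a family of edges none of which contains another. -/
structure Clutter (n : ℕ) where
  edges : Finset (Finset (Fin n))
  antichain : ∀ e ∈ edges, ∀ f ∈ edges, e ⊆ f → e = f

namespace Clutter

variable {n : ℕ}

/-- The edge ideal of a clutter, generated by the squarefree monomials
`x_e = ∏_{i ∈ e} x_i` for the edges `e`. -/
def edgeIdeal (K : Type) [Field K] (C : Clutter n) : Ideal (MvPoly K (Fin n)) :=
  Ideal.span ((fun e : Finset (Fin n) => ∏ i ∈ e, (MvPolynomial.X i : MvPoly K (Fin n))) ''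
    ↑C.edges)

/-- `c` is a vertex cover of `C`: it meets every edge. -/
def IsCover (C : Clutter n) (c : Finset (Fin n)) : Prop :=
  ∀ e ∈ C.edges, ∃ i ∈ e, i ∈ c

/-- `c` is a minimal vertex cover of `C`. -/
def IsMinCover (C : Clutter n) (c : Finset (Fin n)) : Prop :=
  IsCover C c ∧ ∀ d ⊆ c, IsCover C d → d = c

open Classical in
/-- The clutter of minimal vertex covers (the Alexander dual clutter `C^∨`). -/
def dual (C : Clutter n) : Clutter n where
  edges := Finset.univ.filter fun c => IsMinCover C c
  antichain := by
    intro e he f hf hef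
    simp only [Finset.mem_filter] at he hf
    exact hf.2.2 e hef he.2.1

/-- The ideal of covers (Alexander dual ideal) of a clutter: the edge ideal of `C^∨`. -/
def coverIdeal (K : Type) [Field K] (C : Clutter n) : Ideal (MvPoly K (Fin n)) :=
  edgeIdeal K (dual C)

open Classical in
/-- Deletion `C ∖ V`: delete all edges of `C` that intersect `V`. -/
def del (C : Clutter n) (V : Finset (Fin n)) : Clutter n where
  edges := C.edges.filter fun e => ∀ i ∈ V, i ∉ e
  antichain := by
    intro e he f hf hef
    simp only [Finset.mem_filter] at he hf
    exact C.antichain e he.1 f hf.1 hef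

/-- All minimal vertex covers of `C` have the same cardinality. -/
def Unmixed (C : Clutter n) : Prop :=
  ∀ c d, IsMinCover C c → IsMinCover C d → c.card = d.card

/-- All edges of `C` have the same cardinality. -/
def Uniform (C : Clutter n) : Prop :=
  ∀ e ∈ C.edges, ∀ f ∈ C.edges, e.card = f.card

/-- The set covering polyhedron `Q(A) = {x ∈ ℝ^n : x ≥ 0, xA ≥ 1}` of the clutter. -/
def coverPolyhedron (C : Clutter n) : Set (Fin n → ℝ) :=
  { x | (∀ i, 0 ≤ x i) ∧ ∀ e ∈ C.edges, 1 ≤ ∑ i ∈ e, x i }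

/-- The set covering polyhedron is integral: all of its vertices (extreme points)
have integer coordinates. -/
def IntegralPolyhedron (C : Clutter n) : Prop :=
  ∀ x ∈ Set.extremePoints ℝ (coverPolyhedron C), ∀ i, ∃ z : ℤ, x i = (z : ℝ)

open Classical in
/-- The max-flow min-cut property: for every nonnegative integral vector `α` both sides of
the LP-duality equation `min{⟨α,x⟩ : x ≥ 0, xA ≥ 1} = max{⟨y,1⟩ : y ≥ 0, Ay ≤ α}`
have integral optimum solutions. -/
def HasMFMC (C : Clutter n) : Prop :=
  ∀ α : Fin n → ℕ,
    ∃ x : Fin n → ℕ,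
      ((fun i => (x i : ℝ)) ∈ coverPolyhedron C ∧
        ∀ z ∈ coverPolyhedron C, ∑ i, (α i : ℝ) * x i ≤ ∑ i, (α i : ℝ) * z i) ∧
    ∃ y : Finset (Fin n) → ℕ,
      ((∀ e, e ∉ C.edges → y e = 0) ∧
        (∀ i, ∑ e ∈ C.edges.filter (fun e => i ∈ e), y e ≤ α i) ∧
        (∀ y' : Finset (Fin n) → ℝ, (∀ e, 0 ≤ y' e) → (∀ e, e ∉ C.edges → y' e = 0) →
          (∀ i, ∑ e ∈ C.edges.filter (fun e => i ∈ e), y' e ≤ (α i : ℝ)) →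
          ∑ e ∈ C.edges, y' e ≤ ∑ e ∈ C.edges, (y e : ℝ))) ∧
      (∑ i, (α i : ℝ) * x i = ∑ e ∈ C.edges, (y e : ℝ))

end Clutter

open Classical in
/-- The unique clutter whose edge ideal is a given squarefree monomial ideal `I`:
its edges are the minimal supports of squarefree monomials belonging to `I`. -/
def clutterOf (K : Type) [Field K] {n : ℕ} (I : Ideal (MvPoly K (Fin n))) : Clutter n where
  edges := Finset.univ.filter fun e =>
    ((∏ i ∈ e, MvPolynomial.X i : MvPoly K (Fin n)) ∈ I ∧
      ∀ f ⊆ e, (∏ i ∈ f, MvPolynomial.X i : MvPoly K (Fin n)) ∈ I → f = e)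
  antichain := by
    intro e he f hf hef
    simp only [Finset.mem_filter] at he hf
    exact hf.2.2 e hef he.2.1

/-- The Alexander dual of a squarefree monomial ideal. -/
def idealDual (K : Type) [Field K] {n : ℕ} (I : Ideal (MvPoly K (Fin n))) :
    Ideal (MvPoly K (Fin n)) :=
  Clutter.coverIdeal K (clutterOf K I)

end

/-!
Both assertions follow from an equality `I ^ k = (I ^ (k + 1) : x_e)`, because passing from a
monomial ideal `J` to `(J : x_v)` neither lowers the depth nor raises the regularity of the
quotient.

By the max-flow min-cut property `I ^ k` is spanned by the monomials of weight at least `k` on every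
minimal cover. An optimal integral packing of edges for the weight `1` contains, by unmixedness and
complementary slackness, an edge `e` that meets each minimal cover in exactly one vertex.
Multiplication by `x_e` therefore raises each of these weights by exactly one, which gives the
equality.

For a monomial ideal `J` there is an exact sequence
`0 → R/(J : x_v)(-1) → R/J → R/(J, x_v) → 0`. Deleting the terms divisible by `x_v` makes
`R/(J, x_v)` a retract of `R/J` over the other variables, so its Koszul homology over these vanishes
where that of `R/J` does, and the long exact sequence carries vanishing from `R/J` to `R/(J : x_v)`.
Depth and regularity are both read off from this vanishing. The quotient `R/J` has a graded free
resolution with `F_i` generated in degrees at most `i + s` if and only if `H_i(x; R/J)_e = 0` for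
all `e > i + s`. On the other side, `Ext^i(R/m, M) = 0` if and only if `H_{n-i}(x; M) = 0`, by
dimension shifting along embeddings into injective modules, whose Koszul homology is concentrated
in degree `n`.
-/

universe u v w

/-! ### Koszul complexes -/

namespace Koszul

section Definitions

variable {R : Type u} [CommRing R]

/-- The total module of the Koszul complex of the list `l` with coefficients in `M`. For `x :: l`
the first factor is the part without the exterior generator `e_x`, the second the coefficient of
`e_x`. -/
def Chain (M : Type v) : List R → Type v
  | [] => M
  | _ :: l => Chain M l × Chain M l

instance Chain.instAddCommGroup (M : Type v) [AddCommGroup M] :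
    (l : List R) → AddCommGroup (Chain M l)
  | [] => inferInstanceAs (AddCommGroup M)
  | _ :: l =>
    letI := instAddCommGroup M l
    inferInstanceAs (AddCommGroup (Chain M l × Chain M l))

instance Chain.instModule (M : Type v) [AddCommGroup M] [Module R M] :
    (l : List R) → Module R (Chain M l)
  | [] => inferInstanceAs (Module R M)
  | _ :: l =>
    letI := instModule M l
    inferInstanceAs (Module R (Chain M l × Chain M l))

variable {M : Type v} [AddCommGroup M] [Module R M]

/-- The Koszul differential, written as the differential of the mapping cone of multiplication by
`x`. It is an endomorphism of the total module; the homological degree is recorded by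
`Koszul.piece`. -/
def d : (l : List R) → Chain M l →ₗ[R] Chain M l
  | [] => 0
  | x :: l =>
    (LinearMap.prod (d l ∘ₗ LinearMap.fst R _ _ + x • LinearMap.snd R _ _)
      (-(d l ∘ₗ LinearMap.snd R _ _)) : Chain M l × Chain M l →ₗ[R] Chain M l × Chain M l)

/-- The chains of homological degree `i` and internal degree `e`, for a family `𝓜` of subgroups of
`M` thought of as its graded pieces. Every element of `l` has internal degree `1`. -/
def piece (𝓜 : ℤ → AddSubgroup M) : (l : List R) → ℤ → ℤ → AddSubgroup (Chain M l)
  | [], i, e => (if i = 0 then 𝓜 e else ⊥ : AddSubgroup M)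
  | _ :: l, i, e =>
    ((piece 𝓜 l i e).prod (piece 𝓜 l (i - 1) (e - 1)) : AddSubgroup (Chain M l × Chain M l))

/-- Vanishing of the Koszul homology `H_i(l; M)_e`. The constant family `𝓜 = ⊤` forgets the internal
grading. -/
def ExactAt (𝓜 : ℤ → AddSubgroup M) (l : List R) (i e : ℤ) : Prop :=
  ∀ z ∈ piece 𝓜 l i e, d l z = 0 → ∃ w ∈ piece 𝓜 l (i + 1) e, d l w = z

/-- Multiplication by each element of `l` raises the degree by one, for the pieces `𝓜`. -/
def RaisesDegree (𝓜 : ℤ → AddSubgroup M) (l : List R) : Prop :=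
  ∀ x ∈ l, ∀ e, ∀ m ∈ 𝓜 (e - 1), x • m ∈ 𝓜 e

/-- The map of Koszul complexes induced by an additive map of the coefficients. -/
def map {N : Type w} [AddCommGroup N] (φ : M →+ N) : (l : List R) → Chain M l →+ Chain N l
  | [] => φ
  | _ :: l => AddMonoidHom.prodMap (map φ l) (map φ l)

/-- The inclusion of the coefficients as the chains of homological degree `0`. -/
def bot : (l : List R) → M →ₗ[R] Chain M l
  | [] => LinearMap.id
  | _ :: l => LinearMap.inl R (Chain M l) (Chain M l) ∘ₗ bot l

/-- The inclusion of the coefficients as the chains of top homological degree. -/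
def top : (l : List R) → M →ₗ[R] Chain M l
  | [] => LinearMap.id
  | _ :: l => LinearMap.inr R (Chain M l) (Chain M l) ∘ₗ top l

/-- The part `∑_{x ∈ l} x M_{e-1}` of `M_e` generated in lower degree. -/
def decomposables (𝓜 : ℤ → AddSubgroup M) (l : List R) (e : ℤ) : AddSubgroup M :=
  ⨆ x ∈ l, (𝓜 (e - 1)).map (DistribSMul.toAddMonoidHom M x)

end Definitions

section Additive

variable {R : Type u} {M : Type v} [AddCommGroup M] {N : Type w} [AddCommGroup N]
  {P : Type*} [AddCommGroup P] {𝓜 : ℤ → AddSubgroup M} {𝓝 : ℤ → AddSubgroup N}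
  {𝓟 : ℤ → AddSubgroup P} {l : List R} {i e : ℤ}

theorem map_comp_apply (ψ : N →+ P) (φ : M →+ N) (z : Chain M l) :
    map (ψ.comp φ) l z = map ψ l (map φ l z) := by
  induction l with
  | nil => rfl
  | cons x l ih => exact Prod.ext (ih z.1) (ih z.2)

theorem map_id_apply (z : Chain M l) : map (AddMonoidHom.id M) l z = z := by
  induction l with
  | nil => rfl
  | cons x l ih => exact Prod.ext (ih z.1) (ih z.2)

theorem map_zero_apply (z : Chain M l) : map (0 : M →+ N) l z = 0 := by
  induction l with
  | nil => rfl
  | cons x l ih => exact Prod.ext (ih z.1) (ih z.2)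

theorem map_map_cancel (φ : M →+ N) (ψ : N →+ M) (h : ∀ m, ψ (φ m) = m) (z : Chain M l) :
    map ψ l (map φ l z) = z := by
  rw [← map_comp_apply, show ψ.comp φ = AddMonoidHom.id M from AddMonoidHom.ext h, map_id_apply]

theorem map_map_eq_zero (φ : M →+ N) (ψ : N →+ P) (h : ∀ m, ψ (φ m) = 0) (z : Chain M l) :
    map ψ l (map φ l z) = 0 := by
  rw [← map_comp_apply, show ψ.comp φ = 0 from AddMonoidHom.ext h, map_zero_apply]

theorem map_injective (φ : M →+ N) (h : Function.Injective φ) (l : List R) :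
    Function.Injective (map φ l) := by
  induction l with
  | nil => exact h
  | cons _ l ih => exact Function.Injective.prodMap ih ih

theorem mem_piece_nil {m : Chain M ([] : List R)} :
    m ∈ piece 𝓜 ([] : List R) i e ↔ i = 0 ∧ m ∈ 𝓜 e ∨ m = 0 := by
  change m ∈ (if i = 0 then 𝓜 e else ⊥ : AddSubgroup M) ↔ _
  split_ifs with hi
  · exact ⟨fun h => .inl ⟨hi, h⟩, fun h => h.elim And.right fun h => h ▸ zero_mem _⟩
  · exact ⟨.inr, fun h => h.resolve_left fun h => hi h.1⟩

theorem piece_shift (𝓜 : ℤ → AddSubgroup M) (c : ℤ) (l : List R) (i e : ℤ) :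
    piece (fun e => 𝓜 (e - c)) l i e = piece 𝓜 l i (e - c) := by
  induction l generalizing i e with
  | nil => rfl
  | cons x l ih =>
    change AddSubgroup.prod _ _ = AddSubgroup.prod _ _
    rw [ih, ih, sub_right_comm]

theorem map_mem_piece (φ : M →+ N) (h : ∀ e, ∀ m ∈ 𝓜 e, φ m ∈ 𝓝 e) {z : Chain M l}
    (hz : z ∈ piece 𝓜 l i e) : map φ l z ∈ piece 𝓝 l i e := by
  induction l generalizing i e with
  | nil =>
    rcases mem_piece_nil.1 hz with ⟨rfl, hz'⟩ | rfl
    · exact h e z hz'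
    · exact (map_zero φ).symm ▸ zero_mem _
  | cons x l ih => exact ⟨ih hz.1, ih hz.2⟩

theorem exists_mem_piece_map_eq_of_map_eq_zero (φ : M →+ N) (ψ : N →+ P)
    (h : ∀ e, ∀ m ∈ 𝓝 e, ψ m = 0 → ∃ a ∈ 𝓜 e, φ a = m) {z : Chain N l}
    (hz : z ∈ piece 𝓝 l i e) (hψ : map ψ l z = 0) : ∃ a ∈ piece 𝓜 l i e, map φ l a = z := by
  induction l generalizing i e with
  | nil =>
    rcases mem_piece_nil.1 hz with ⟨rfl, hz'⟩ | rfl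
    · exact h e z hz' hψ
    · exact ⟨0, zero_mem _, map_zero _⟩
  | cons x l ih =>
    obtain ⟨a, ha, haz⟩ := ih hz.1 (congrArg Prod.fst hψ)
    obtain ⟨b, hb, hbz⟩ := ih hz.2 (congrArg Prod.snd hψ)
    exact ⟨(a, b), ⟨ha, hb⟩, Prod.ext haz hbz⟩

theorem exists_mem_piece_map_eq (ψ : N →+ P) (h : ∀ e, ∀ m ∈ 𝓟 e, ∃ a ∈ 𝓝 e, ψ a = m)
    {z : Chain P l} (hz : z ∈ piece 𝓟 l i e) : ∃ a ∈ piece 𝓝 l i e, map ψ l a = z := by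
  induction l generalizing i e with
  | nil =>
    rcases mem_piece_nil.1 hz with ⟨rfl, hz'⟩ | rfl
    · exact h e z hz'
    · exact ⟨0, zero_mem _, map_zero _⟩
  | cons x l ih =>
    obtain ⟨a, ha, haz⟩ := ih hz.1
    obtain ⟨b, hb, hbz⟩ := ih hz.2
    exact ⟨(a, b), ⟨ha, hb⟩, Prod.ext haz hbz⟩

theorem eq_zero_of_mem_piece_of_neg {z : Chain M l} (hz : z ∈ piece 𝓜 l i e) (hi : i < 0) :
    z = 0 := by
  induction l generalizing i e with
  | nil => exact (mem_piece_nil.1 hz).resolve_left fun h => hi.ne h.1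
  | cons x l ih => exact Prod.ext (ih hz.1 hi) (ih hz.2 (by lia))

theorem eq_zero_of_mem_piece_of_length_lt {z : Chain M l} (hz : z ∈ piece 𝓜 l i e)
    (hi : l.length < i) : z = 0 := by
  induction l generalizing i e with
  | nil => exact (mem_piece_nil.1 hz).resolve_left fun h => hi.ne' h.1
  | cons x l ih =>
    rw [List.length_cons] at hi
    exact Prod.ext (ih hz.1 (by lia)) (ih hz.2 (by lia))

end Additive

variable {R : Type u} [CommRing R] {M : Type v} [AddCommGroup M] [Module R M]
  {N : Type w} [AddCommGroup N] [Module R N] {P : Type*} [AddCommGroup P] [Module R P]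
  {𝓜 : ℤ → AddSubgroup M} {𝓝 : ℤ → AddSubgroup N} {𝓟 : ℤ → AddSubgroup P}
  {x : R} {l : List R} {i e : ℤ}

theorem d_cons (a b : Chain M l) :
    d (x :: l) ((a, b) : Chain M l × Chain M l) =
      ((d l a + x • b, -d l b) : Chain M l × Chain M l) := rfl

theorem d_d (z : Chain M l) : d l (d l z) = 0 := by
  induction l with
  | nil => rfl
  | cons x l ih =>
    obtain ⟨a, b⟩ := z
    have h₁ : d l (d l a + x • b) + x • -d l b = 0 := by simp [ih]
    have h₂ : -d l (-d l b) = 0 := by simp [ih]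
    exact Prod.ext h₁ h₂

theorem map_smul_apply (x : R) (z : Chain M l) :
    map (DistribSMul.toAddMonoidHom M x) l z = x • z := by
  induction l with
  | nil => rfl
  | cons y l ih => exact Prod.ext (ih z.1) (ih z.2)

theorem smul_eq_zero_of_forall (h : ∀ m : M, x • m = 0) (z : Chain M l) : x • z = 0 := by
  rw [← map_smul_apply, show DistribSMul.toAddMonoidHom M x = 0 from AddMonoidHom.ext h,
    map_zero_apply]

protected theorem map_smul (φ : M →+ N) (h : ∀ m, φ (x • m) = x • φ m) (z : Chain M l) :
    map φ l (x • z) = x • map φ l z := by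
  have hφ : φ.comp (DistribSMul.toAddMonoidHom M x) = (DistribSMul.toAddMonoidHom N x).comp φ :=
    AddMonoidHom.ext h
  rw [← map_smul_apply, ← map_smul_apply, ← map_comp_apply, ← map_comp_apply, hφ]

theorem map_d (φ : M →+ N) (h : ∀ y ∈ l, ∀ m, φ (y • m) = y • φ m) (z : Chain M l) :
    map φ l (d l z) = d l (map φ l z) := by
  induction l with
  | nil => exact map_zero φ
  | cons x l ih =>
    obtain ⟨hx, hl⟩ := List.forall_mem_cons.1 h
    obtain ⟨a, b⟩ := z
    have h₁ : map φ l (d l a + x • b) = d l (map φ l a) + x • map φ l b := by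
      rw [map_add, ih hl, Koszul.map_smul φ hx]
    have h₂ : map φ l (-d l b) = -d l (map φ l b) := by rw [map_neg, ih hl]
    exact Prod.ext h₁ h₂

theorem map_linear_d (φ : M →ₗ[R] N) (z : Chain M l) :
    map (φ : M →+ N) l (d l z) = d l (map (φ : M →+ N) l z) :=
  map_d (φ : M →+ N) (fun y _ m => φ.map_smul y m) z

theorem smul_mem_piece (hx : ∀ e, ∀ m ∈ 𝓜 (e - 1), x • m ∈ 𝓜 e) {z : Chain M l}
    (hz : z ∈ piece 𝓜 l i (e - 1)) : x • z ∈ piece 𝓜 l i e := by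
  rw [← piece_shift] at hz
  rw [← map_smul_apply]
  exact map_mem_piece _ hx hz

theorem d_mem_piece (h : RaisesDegree 𝓜 l) {z : Chain M l} (hz : z ∈ piece 𝓜 l i e) :
    d l z ∈ piece 𝓜 l (i - 1) e := by
  induction l generalizing i e with
  | nil => exact zero_mem _
  | cons x l ih =>
    obtain ⟨hx, hl⟩ := List.forall_mem_cons.1 h
    exact ⟨add_mem (ih hl hz.1) (smul_mem_piece hx hz.2),
      (piece 𝓜 l _ _).neg_mem (ih hl hz.2)⟩

theorem exactAt_shift (c : ℤ) :
    ExactAt (fun e => 𝓜 (e - c)) l i e ↔ ExactAt 𝓜 l i (e - c) := by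
  unfold ExactAt
  rw [piece_shift, piece_shift]

theorem exactAt_of_neg (hi : i < 0) : ExactAt 𝓜 l i e := fun z hz _ =>
  ⟨0, zero_mem _, by rw [map_zero, eq_zero_of_mem_piece_of_neg hz hi]⟩

theorem exactAt_of_length_lt (hi : l.length < i) : ExactAt 𝓜 l i e := fun z hz _ =>
  ⟨0, zero_mem _, by rw [map_zero, eq_zero_of_mem_piece_of_length_lt hz hi]⟩

section LongExactSequence

/-- `0 → M → N → P → 0` is exact in each degree, for the pieces `𝓜`, `𝓝` and `𝓟`, and the elements
of `l` act on `N` with degree one. -/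
structure GradedShortExact (l : List R) (𝓜 : ℤ → AddSubgroup M) (𝓝 : ℤ → AddSubgroup N)
    (𝓟 : ℤ → AddSubgroup P) (φ : M →ₗ[R] N) (ψ : N →ₗ[R] P) : Prop where
  injective : Function.Injective φ
  comp_eq_zero : ∀ m, ψ (φ m) = 0
  map_mem_left : ∀ e, ∀ m ∈ 𝓜 e, φ m ∈ 𝓝 e
  map_mem_right : ∀ e, ∀ m ∈ 𝓝 e, ψ m ∈ 𝓟 e
  exact : ∀ e, ∀ m ∈ 𝓝 e, ψ m = 0 → ∃ a ∈ 𝓜 e, φ a = m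
  surjective : ∀ e, ∀ m ∈ 𝓟 e, ∃ a ∈ 𝓝 e, ψ a = m
  raisesDegree : RaisesDegree 𝓝 l

variable {φ : M →ₗ[R] N} {ψ : N →ₗ[R] P}

theorem GradedShortExact.exactAt_left (S : GradedShortExact l 𝓜 𝓝 𝓟 φ ψ)
    (hP : ExactAt 𝓟 l (i + 1) e) (hN : ExactAt 𝓝 l i e) : ExactAt 𝓜 l i e := by
  intro a ha hda
  obtain ⟨b, hb, hdb⟩ := hN _ (map_mem_piece (φ : M →+ N) S.map_mem_left ha)
    (by rw [← map_linear_d, hda, map_zero])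
  obtain ⟨c, hc, hdc⟩ := hP _ (map_mem_piece (ψ : N →+ P) S.map_mem_right hb)
    (by rw [← map_linear_d, hdb]; exact map_map_eq_zero _ _ S.comp_eq_zero a)
  obtain ⟨b', hb', rfl⟩ := exists_mem_piece_map_eq (ψ : N →+ P) S.surjective hc
  have hdb' : d l b' ∈ piece 𝓝 l (i + 1) e := by simpa using d_mem_piece S.raisesDegree hb'
  obtain ⟨a', ha', haa'⟩ := exists_mem_piece_map_eq_of_map_eq_zero (φ : M →+ N) (ψ : N →+ P) S.exact
    (sub_mem hb hdb') (by rw [map_sub, map_linear_d, hdc, sub_self])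
  refine ⟨a', ha', map_injective (φ : M →+ N) S.injective l ?_⟩
  rw [map_linear_d, haa', map_sub, d_d, sub_zero, hdb]

theorem GradedShortExact.exactAt_right (S : GradedShortExact l 𝓜 𝓝 𝓟 φ ψ)
    (hM : ExactAt 𝓜 l (i - 1) e) (hN : ExactAt 𝓝 l i e) : ExactAt 𝓟 l i e := by
  intro c hc hdc
  obtain ⟨b, hb, rfl⟩ := exists_mem_piece_map_eq (ψ : N →+ P) S.surjective hc
  obtain ⟨a, ha, hab⟩ := exists_mem_piece_map_eq_of_map_eq_zero (φ : M →+ N) (ψ : N →+ P) S.exact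
    (d_mem_piece S.raisesDegree hb) (by rw [map_linear_d, hdc])
  have hda : d l a = 0 := map_injective (φ : M →+ N) S.injective l <| by
    rw [map_linear_d, hab, d_d, map_zero]
  obtain ⟨a', ha', haa'⟩ := hM a ha hda
  rw [sub_add_cancel] at ha'
  obtain ⟨w, hw, hwb⟩ := hN (b - map (φ : M →+ N) l a')
    (sub_mem hb (map_mem_piece (φ : M →+ N) S.map_mem_left ha'))
    (by rw [map_sub, ← map_linear_d, haa', hab, sub_self])
  refine ⟨map (ψ : N →+ P) l w, map_mem_piece (ψ : N →+ P) S.map_mem_right hw, ?_⟩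
  rw [← map_linear_d, hwb, map_sub, map_map_eq_zero (φ : M →+ N) (ψ : N →+ P) S.comp_eq_zero,
    sub_zero]

end LongExactSequence

section LowestDegree

theorem d_bot (m : M) : d l (bot l m) = 0 := by
  induction l with
  | nil => rfl
  | cons x l ih =>
    change d (x :: l) ((bot l m, 0) : Chain M l × Chain M l) = 0
    rw [d_cons, ih, map_zero, smul_zero, add_zero, neg_zero]
    rfl

theorem mem_piece_zero {z : Chain M l} : z ∈ piece 𝓜 l 0 e ↔ ∃ m ∈ 𝓜 e, bot l m = z := by
  induction l generalizing e with
  | nil => exact ⟨fun h => ⟨z, h, rfl⟩, fun ⟨_, h, hz⟩ => hz ▸ h⟩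
  | cons x l ih =>
    obtain ⟨a, b⟩ := z
    constructor
    · intro hz
      obtain ⟨m, hm, rfl⟩ := ih.1 hz.1
      exact ⟨m, hm, Prod.ext rfl (eq_zero_of_mem_piece_of_neg hz.2 (by norm_num)).symm⟩
    · rintro ⟨m, hm, h⟩
      exact ⟨ih.2 ⟨m, hm, congrArg Prod.fst h⟩, (congrArg Prod.snd h : 0 = b) ▸ zero_mem _⟩

theorem mem_decomposables_cons {m : M} : m ∈ decomposables 𝓜 (x :: l) e ↔
    ∃ a ∈ 𝓜 (e - 1), m - x • a ∈ decomposables 𝓜 l e := by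
  simp only [decomposables, List.mem_cons, iSup_or, iSup_sup_eq, iSup_iSup_eq_left,
    AddSubgroup.mem_sup, AddSubgroup.mem_map, DistribSMul.toAddMonoidHom_apply,
    exists_exists_and_eq_and]
  exact exists_congr fun a => and_congr_right fun _ =>
    ⟨fun ⟨b, hb, h⟩ => by rwa [← h, add_sub_cancel_left], fun h => ⟨_, h, add_sub_cancel _ _⟩⟩

theorem exists_mem_piece_d_eq_bot_iff {m : M} :
    (∃ w ∈ piece 𝓜 l 1 e, d l w = bot l m) ↔ m ∈ decomposables 𝓜 l e := by
  induction l generalizing e m with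
  | nil =>
    simp only [decomposables, List.not_mem_nil, iSup_false, iSup_bot, AddSubgroup.mem_bot]
    exact ⟨fun ⟨w, _, h⟩ => h.symm, fun h => ⟨0, zero_mem _, h.symm⟩⟩
  | cons x l ih =>
    rw [mem_decomposables_cons]
    constructor
    · rintro ⟨⟨w₁, w₂⟩, hw, h⟩
      obtain ⟨a, ha, rfl⟩ := mem_piece_zero.1 hw.2
      have h₁ : d l w₁ + x • bot l a = bot l m := congrArg Prod.fst h
      exact ⟨a, ha, ih.1 ⟨w₁, hw.1, by rw [map_sub, _root_.map_smul, ← h₁, add_sub_cancel_right]⟩⟩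
    · rintro ⟨a, ha, h⟩
      obtain ⟨w, hw, hwm⟩ := ih.2 h
      refine ⟨(w, bot l a), ⟨hw, mem_piece_zero.2 ⟨a, ha, rfl⟩⟩, ?_⟩
      rw [d_cons, hwm, d_bot, ← _root_.map_smul, ← map_add, sub_add_cancel, neg_zero]
      rfl

theorem exactAt_zero_iff : ExactAt 𝓜 l 0 e ↔ 𝓜 e ≤ decomposables 𝓜 l e := by
  constructor
  · intro h m hm
    exact exists_mem_piece_d_eq_bot_iff.1 (h _ (mem_piece_zero.2 ⟨m, hm, rfl⟩) (d_bot m))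
  · intro h z hz _
    obtain ⟨m, hm, rfl⟩ := mem_piece_zero.1 hz
    exact exists_mem_piece_d_eq_bot_iff.2 (h hm)

end LowestDegree

section TopDegree

theorem top_injective (l : List R) : Function.Injective (top l : M →ₗ[R] Chain M l) := by
  induction l with
  | nil => exact Function.injective_id
  | cons _ l ih => exact LinearMap.inr_injective.comp ih

theorem map_top (φ : M →+ N) (m : M) : map φ l (top l m) = top l (φ m) := by
  induction l with
  | nil => rfl
  | cons x l ih => exact Prod.ext (map_zero (map φ l)) ih

theorem d_top_eq_zero_iff {m : M} : d l (top l m) = 0 ↔ ∀ x ∈ l, x • m = 0 := by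
  induction l with
  | nil => exact ⟨fun _ x hx => absurd hx List.not_mem_nil, fun _ => rfl⟩
  | cons x l ih =>
    have hd : d (x :: l) (top (x :: l) m) =
        ((top l (x • m), -d l (top l m)) : Chain M l × Chain M l) := by
      change d (x :: l) ((0, top l m) : Chain M l × Chain M l) = _
      rw [d_cons, map_zero, zero_add, _root_.map_smul]
    rw [hd, List.forall_mem_cons, ← ih, ← (top_injective l).eq_iff (b := 0), map_zero,
      ← neg_eq_zero (a := d l _)]
    exact Prod.mk_eq_zero

theorem mem_piece_length {z : Chain M l} :
    z ∈ piece (⊤ : ℤ → AddSubgroup M) l l.length e ↔ ∃ m, top l m = z := by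
  induction l generalizing e with
  | nil => exact ⟨fun _ => ⟨z, rfl⟩, fun _ => mem_piece_nil.2 (.inl ⟨rfl, trivial⟩)⟩
  | cons x l ih =>
    obtain ⟨a, b⟩ := z
    have hlen : ((x :: l).length - 1 : ℤ) = l.length := by simp
    constructor
    · rintro ⟨ha, hb⟩
      obtain ⟨m, hm⟩ := ih.1 (hlen ▸ hb)
      exact ⟨m, Prod.ext (eq_zero_of_mem_piece_of_length_lt ha (by simp)).symm hm⟩
    · rintro ⟨m, h⟩
      exact ⟨(congrArg Prod.fst h : 0 = a) ▸ zero_mem _,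
        hlen.symm ▸ ih.2 ⟨m, congrArg Prod.snd h⟩⟩

theorem exactAt_length_iff :
    ExactAt (⊤ : ℤ → AddSubgroup M) l l.length e ↔ ∀ m : M, (∀ x ∈ l, x • m = 0) → m = 0 := by
  constructor
  · intro h m hm
    obtain ⟨w, hw, hd⟩ := h _ (mem_piece_length.2 ⟨m, rfl⟩) (d_top_eq_zero_iff.2 hm)
    rw [eq_zero_of_mem_piece_of_length_lt hw (by simp), map_zero] at hd
    exact top_injective l (by rw [← hd, map_zero])
  · intro h z hz hd
    obtain ⟨m, rfl⟩ := mem_piece_length.1 hz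
    exact ⟨0, zero_mem _, by rw [h m (d_top_eq_zero_iff.1 hd), map_zero, map_zero]⟩

end TopDegree

section Cons

/-- The acyclicity of the Koszul complex of a polynomial ring, where `δ` is division by a variable
that drops the terms not divisible by it. -/
theorem exactAt_of_pos_of_forall_exists_leftInverse (hl : l.Nodup) (hdeg : RaisesDegree 𝓜 l)
    (h : ∀ x ∈ l, ∃ δ : M →+ M, (∀ m, δ (x • m) = m) ∧ (∀ e, ∀ m ∈ 𝓜 e, δ m ∈ 𝓜 (e - 1)) ∧
      ∀ y ∈ l, y ≠ x → ∀ m, δ (y • m) = y • δ m) (hi : 0 < i) : ExactAt 𝓜 l i e := by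
  induction l generalizing i e with
  | nil => exact exactAt_of_length_lt hi
  | cons x l ih =>
    obtain ⟨hxl, hl⟩ := List.nodup_cons.1 hl
    obtain ⟨hxdeg, hldeg⟩ := List.forall_mem_cons.1 hdeg
    obtain ⟨⟨δ, hδx, hδdeg, hδ⟩, h⟩ := List.forall_mem_cons.1 h
    have hδd (z : Chain M l) : map δ l (d l z) = d l (map δ l z) :=
      map_d δ (fun y hy => hδ y (List.mem_cons_of_mem x hy) (by rintro rfl; exact hxl hy)) z
    have hδsmul (z : Chain M l) : map δ l (x • z) = z := by
      rw [← map_smul_apply]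
      exact map_map_cancel _ _ hδx z
    rintro ⟨a, b⟩ ⟨ha, -⟩ hz
    have had : d l a = -(x • b) := eq_neg_of_add_eq_zero_left (congrArg Prod.fst hz)
    have hbd : d l (map δ l a) = -b := by rw [← hδd, had, map_neg, hδsmul]
    have hδa : map δ l a ∈ piece 𝓜 l i (e - 1) := by
      rw [← piece_shift]
      exact map_mem_piece δ hδdeg ha
    obtain ⟨w, hw, hdw⟩ := ih hl hldeg
      (fun y hy => (h y hy).imp fun _ hδ =>
        ⟨hδ.1, hδ.2.1, fun z hz => hδ.2.2 z (List.mem_cons_of_mem x hz)⟩) hi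
      (a - x • map δ l a) (sub_mem ha (smul_mem_piece hxdeg hδa))
      (by rw [map_sub, _root_.map_smul, had, hbd, smul_neg, sub_self])
    refine ⟨(w, map δ l a), ⟨hw, by simpa using hδa⟩, ?_⟩
    rw [d_cons, hdw, sub_add_cancel, hbd, neg_neg]

theorem ExactAt.of_section (h : ExactAt 𝓜 (x :: l) i e) (hx : ∀ m : N, x • m = 0) (p : M →ₗ[R] N)
    (s : N →+ M) (hs : ∀ y ∈ l, ∀ m, s (y • m) = y • s m) (hps : ∀ m, p (s m) = m)
    (hp𝓝 : ∀ e, ∀ m ∈ 𝓜 e, p m ∈ 𝓝 e) (hs𝓜 : ∀ e, ∀ m ∈ 𝓝 e, s m ∈ 𝓜 e) : ExactAt 𝓝 l i e := by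
  intro z hz hd
  have hsz : d l (map s l z) = 0 := by rw [← map_d s hs, hd, map_zero]
  obtain ⟨⟨a, b⟩, hw, hdw⟩ := h ((map s l z, 0) : Chain M l × Chain M l)
    ⟨map_mem_piece s hs𝓜 hz, zero_mem _⟩
    (by rw [d_cons, hsz, map_zero, smul_zero, add_zero, neg_zero]; rfl)
  have hab : d l a + x • b = map s l z := congrArg Prod.fst hdw
  refine ⟨map (p : M →+ N) l a, map_mem_piece (p : M →+ N) hp𝓝 hw.1, ?_⟩
  calc d l (map (p : M →+ N) l a)
      = map (p : M →+ N) l (d l a) + x • map (p : M →+ N) l b := by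
        rw [map_linear_d, smul_eq_zero_of_forall hx, add_zero]
    _ = map (p : M →+ N) l (map s l z) := by
        rw [← hab, map_add, Koszul.map_smul _ fun m => p.map_smul x m]
    _ = z := map_map_cancel s (p : M →+ N) hps z

theorem ExactAt.cons_of_smul_eq_zero (hx : ∀ m : N, x • m = 0) (h : ExactAt 𝓝 l i e)
    (h' : ExactAt 𝓝 l (i - 1) (e - 1)) : ExactAt 𝓝 (x :: l) i e := by
  rintro ⟨z, w⟩ hz hd
  rw [d_cons, smul_eq_zero_of_forall hx, add_zero] at hd
  obtain ⟨a, ha, haz⟩ := h z hz.1 (congrArg Prod.fst hd)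
  obtain ⟨b, hb, hbw⟩ := h' w hz.2 (neg_eq_zero.1 (congrArg Prod.snd hd))
  rw [sub_add_eq_add_sub] at hb
  refine ⟨((a, -b) : Chain N l × Chain N l), ⟨ha, (piece 𝓝 l _ _).neg_mem hb⟩, ?_⟩
  rw [d_cons, smul_eq_zero_of_forall hx, add_zero, map_neg, neg_neg, haz, hbw]

end Cons

end Koszul

/-! ### Division by a variable -/

section DivVar

variable {σ : Type u} {R : Type v} [CommRing R]

/-- The variables indexed by the list `L`. -/
noncomputable abbrev varList (R : Type v) [CommRing R] (L : List σ) : List (MvPolynomial σ R) :=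
  L.map X

/-- The quotient of the division by the variable `X v`; the terms in which `X v` does not occur
are dropped. -/
noncomputable def divVar (v : σ) : MvPolynomial σ R →+ MvPolynomial σ R where
  toFun p := p.divMonomial (Finsupp.single v 1)
  map_zero' := zero_divMonomial _
  map_add' p q := add_divMonomial p q _

/-- The remainder of the division by the variable `X v`: the sum of the terms in which `X v` does
not occur. -/
noncomputable def modVar (v : σ) : MvPolynomial σ R →+ MvPolynomial σ R :=
  AddMonoidHom.id _ - (AddMonoidHom.mulLeft (X v)).comp (divVar v)

theorem coeff_divVar (v : σ) (p : MvPolynomial σ R) (a : σ →₀ ℕ) :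
    coeff a (divVar v p) = coeff (Finsupp.single v 1 + a) p :=
  coeff_divMonomial _ _ _

theorem divVar_X_mul (v : σ) (p : MvPolynomial σ R) : divVar v (X v * p) = p :=
  X_mul_divMonomial v p

theorem divVar_X_mul_of_ne {v w : σ} (h : w ≠ v) (p : MvPolynomial σ R) :
    divVar v (X w * p) = X w * divVar v p := by
  classical
  ext a
  have hmem : w ∈ (Finsupp.single v 1 + a).support ↔ w ∈ a.support := by simp [h.symm]
  rw [coeff_divVar, coeff_X_mul', coeff_X_mul']
  by_cases hw : w ∈ a.support
  · have hle : Finsupp.single w 1 ≤ a := by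
      simpa [Finsupp.single_le_iff, Nat.one_le_iff_ne_zero] using hw
    rw [if_pos hw, if_pos (hmem.2 hw), coeff_divVar, add_tsub_assoc_of_le hle]
  · rw [if_neg hw, if_neg (mt hmem.1 hw)]

theorem modVar_apply (v : σ) (p : MvPolynomial σ R) : modVar v p = p - X v * divVar v p := rfl

theorem modVar_X_mul (v : σ) (p : MvPolynomial σ R) : modVar v (X v * p) = 0 := by
  rw [modVar_apply, divVar_X_mul, sub_self]

theorem modVar_X_mul_of_ne {v w : σ} (h : w ≠ v) (p : MvPolynomial σ R) :
    modVar v (X w * p) = X w * modVar v p := by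
  rw [modVar_apply, modVar_apply, divVar_X_mul_of_ne h]
  ring

theorem modVar_modVar (v : σ) (p : MvPolynomial σ R) : modVar v (modVar v p) = modVar v p := by
  conv_lhs => rw [modVar_apply v p, map_sub, modVar_X_mul, sub_zero]

theorem coeff_modVar (v : σ) (p : MvPolynomial σ R) (a : σ →₀ ℕ) :
    coeff a (modVar v p) = if a v = 0 then coeff a p else 0 := by
  classical
  rw [modVar_apply, coeff_sub, coeff_X_mul', coeff_divVar]
  by_cases h : a v = 0
  · simp [h]
  · have hle : Finsupp.single v 1 ≤ a := by
      simpa [Finsupp.single_le_iff, Nat.one_le_iff_ne_zero] using h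
    rw [if_pos (Finsupp.mem_support_iff.2 h), if_neg h, add_tsub_cancel_of_le hle, sub_self]

/-- `𝓗` behaves like the grading of the polynomial ring by degree, as far as multiplication and
division by variables are concerned. The constant family `⊤` also does. -/
structure IsVariableGraded (𝓗 : ℤ → AddSubgroup (MvPolynomial σ R)) : Prop where
  X_mul_mem : ∀ v e, ∀ p ∈ 𝓗 (e - 1), X v * p ∈ 𝓗 e
  divVar_mem : ∀ v e, ∀ p ∈ 𝓗 e, divVar v p ∈ 𝓗 (e - 1)

theorem isVariableGraded_top :
    IsVariableGraded (⊤ : ℤ → AddSubgroup (MvPolynomial σ R)) where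
  X_mul_mem _ _ _ _ := AddSubgroup.mem_top _
  divVar_mem _ _ _ _ := AddSubgroup.mem_top _

theorem IsVariableGraded.modVar_mem {𝓗 : ℤ → AddSubgroup (MvPolynomial σ R)}
    (h𝓗 : IsVariableGraded 𝓗) (v : σ) {e : ℤ} {p : MvPolynomial σ R} (hp : p ∈ 𝓗 e) :
    modVar v p ∈ 𝓗 e :=
  sub_mem hp (h𝓗.X_mul_mem v e _ (h𝓗.divVar_mem v e p hp))

end DivVar

/-! ### Monomial ideals -/

section MonomialIdeal

variable {K : Type} [Field K] {n : ℕ} {I : Ideal (MvPoly K (Fin n))}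

theorem mem_of_forall_mono_mem {p : MvPoly K (Fin n)} (h : ∀ a ∈ p.support, mono K a ∈ I) :
    p ∈ I := by
  rw [p.as_sum]
  refine Ideal.sum_mem _ fun a ha => ?_
  simpa only [mono, C_mul_monomial, mul_one] using I.mul_mem_left (C (coeff a p)) (h a ha)

theorem isMonomialIdeal_iff :
    IsMonomialIdeal K I ↔ ∀ p ∈ I, ∀ a ∈ p.support, mono K a ∈ I := by
  refine ⟨?_, fun h => ⟨{a | mono K a ∈ I}, le_antisymm (fun p hp => ?_) ?_⟩⟩
  · rintro ⟨S, rfl⟩ p hp a ha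
    obtain ⟨b, hb, hba⟩ := (mem_ideal_span_monomial_image (R := K)).1 hp a ha
    rw [← tsub_add_cancel_of_le hba, mono, ← one_mul (1 : K), ← monomial_mul]
    exact Ideal.mul_mem_left _ _ (Ideal.subset_span ⟨b, hb, rfl⟩)
  · exact mem_of_forall_mono_mem fun a ha => Ideal.subset_span ⟨a, h p hp a ha, rfl⟩
  · rw [Ideal.span_le]
    rintro _ ⟨a, ha, rfl⟩
    exact ha

theorem IsMonomialIdeal.mono_mem (hI : IsMonomialIdeal K I) {p : MvPoly K (Fin n)} (hp : p ∈ I)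
    {a : Fin n →₀ ℕ} (ha : a ∈ p.support) : mono K a ∈ I :=
  isMonomialIdeal_iff.1 hI p hp a ha

theorem IsMonomialIdeal.mem_of_support_subset (hI : IsMonomialIdeal K I) {p q : MvPoly K (Fin n)}
    (hp : p ∈ I) (h : q.support ⊆ p.support) : q ∈ I :=
  mem_of_forall_mono_mem fun _ ha => hI.mono_mem hp (h ha)

theorem IsMonomialIdeal.colon_X (hI : IsMonomialIdeal K I) (v : Fin n) :
    IsMonomialIdeal K (I.colon {X v}) := by
  refine isMonomialIdeal_iff.2 fun p hp a ha => ?_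
  rw [Submodule.mem_colon_singleton, smul_eq_mul] at hp ⊢
  have := hI.mono_mem hp (a := a + Finsupp.single v 1) (by
    rwa [mem_support_iff, coeff_mul_X, ← mem_support_iff])
  rwa [mono, monomial_add_single, pow_one] at this

theorem IsMonomialIdeal.modVar_mem (hI : IsMonomialIdeal K I) (v : Fin n) {p : MvPoly K (Fin n)}
    (hp : p ∈ I) : modVar v p ∈ I := by
  refine hI.mem_of_support_subset hp fun a ha => ?_
  rw [mem_support_iff, coeff_modVar] at ha
  exact mem_support_iff.2 fun h => ha (by rw [h, ite_self])

theorem IsMonomialIdeal.mem_sup_span_X_iff (hI : IsMonomialIdeal K I) {v : Fin n}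
    {p : MvPoly K (Fin n)} : p ∈ I ⊔ Ideal.span {X v} ↔ modVar v p ∈ I := by
  refine ⟨fun h => ?_, fun h => ?_⟩
  · obtain ⟨a, ha, b, hb, rfl⟩ := Submodule.mem_sup.1 h
    obtain ⟨c, rfl⟩ := Ideal.mem_span_singleton'.1 hb
    rw [map_add, mul_comm c, modVar_X_mul, add_zero]
    exact hI.modVar_mem v ha
  · rw [← sub_add_cancel p (X v * divVar v p), ← modVar_apply]
    exact add_mem (Ideal.mem_sup_left h)
      (Ideal.mem_sup_right (Ideal.mul_mem_right _ _ (Ideal.mem_span_singleton_self _)))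

theorem smul_quotient_sup_span_X_eq_zero (v : Fin n) (m : MvPoly K (Fin n) ⧸ I ⊔ Ideal.span {X v}) :
    (X v : MvPoly K (Fin n)) • m = 0 := by
  obtain ⟨p, rfl⟩ := Ideal.Quotient.mk_surjective m
  exact Ideal.Quotient.eq_zero_iff_mem.2
    (Ideal.mem_sup_right (Ideal.mul_mem_right _ _ (Ideal.mem_span_singleton_self _)))

end MonomialIdeal

/-! ### Koszul homology and colon ideals -/

section Colon

open Koszul

variable {K : Type} [Field K] {n : ℕ} {I : Ideal (MvPoly K (Fin n))}
  {𝓗 : ℤ → AddSubgroup (MvPoly K (Fin n))} {v : Fin n} {L : List (Fin n)} {i e : ℤ}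

/-- The image of `𝓗 e` in `R/I`. -/
def quotientPiece {A : Type u} [CommRing A] (𝓗 : ℤ → AddSubgroup A) (I : Ideal A) (e : ℤ) :
    AddSubgroup (A ⧸ I) :=
  (𝓗 e).map (Ideal.Quotient.mk I : A →+ A ⧸ I)

theorem IsVariableGraded.raisesDegree_quotientPiece (h𝓗 : IsVariableGraded 𝓗)
    (I : Ideal (MvPoly K (Fin n))) (L : List (Fin n)) :
    RaisesDegree (quotientPiece 𝓗 I) (varList K L) := by
  intro y hy e _ ⟨q, hq, h⟩
  obtain ⟨w, -, rfl⟩ := List.mem_map.1 hy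
  exact ⟨X w * q, h𝓗.X_mul_mem w e q hq, by rw [← h]; rfl⟩

/-- The terms without `x_v` provide a section of `R/I → R/(I, x_v)` that is linear over the other
variables. -/
theorem IsMonomialIdeal.exactAt_sup_span_X (hI : IsMonomialIdeal K I) (h𝓗 : IsVariableGraded 𝓗)
    (hv : v ∉ L) (h : ExactAt (quotientPiece 𝓗 I) (varList K (v :: L)) i e) :
    ExactAt (quotientPiece 𝓗 (I ⊔ Ideal.span {X v})) (varList K L) i e := by
  let s : (MvPoly K (Fin n) ⧸ I ⊔ Ideal.span {X v}) →+ MvPoly K (Fin n) ⧸ I :=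
    QuotientAddGroup.map _ _ (modVar v) fun _ hp => hI.mem_sup_span_X_iff.1 hp
  refine ExactAt.of_section h (smul_quotient_sup_span_X_eq_zero v)
    (Submodule.mapQ _ _ LinearMap.id le_sup_left) s ?_ ?_ ?_ ?_
  · intro y hy m
    obtain ⟨w, hw, rfl⟩ := List.mem_map.1 hy
    obtain ⟨p, rfl⟩ := Ideal.Quotient.mk_surjective m
    exact congrArg (Ideal.Quotient.mk I) (modVar_X_mul_of_ne (ne_of_mem_of_not_mem hw hv) p)
  · intro m
    obtain ⟨p, rfl⟩ := Ideal.Quotient.mk_surjective m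
    refine Ideal.Quotient.eq.2 (hI.mem_sup_span_X_iff.2 ?_)
    rw [LinearMap.id_apply, map_sub, modVar_modVar, sub_self]
    exact zero_mem _
  · rintro e _ ⟨q, hq, rfl⟩
    exact ⟨q, hq, rfl⟩
  · rintro e _ ⟨q, hq, rfl⟩
    exact ⟨modVar v q, h𝓗.modVar_mem v hq, rfl⟩

theorem IsMonomialIdeal.gradedShortExact_colon (hI : IsMonomialIdeal K I) (h𝓗 : IsVariableGraded 𝓗)
    (v : Fin n) (L : List (Fin n)) :
    GradedShortExact (varList K L) (fun e => quotientPiece 𝓗 (I.colon {X v}) (e - 1))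
      (quotientPiece 𝓗 I) (quotientPiece 𝓗 (I ⊔ Ideal.span {X v}))
      (Submodule.mapQ _ _ (LinearMap.mulRight (MvPoly K (Fin n)) (X v)) fun _ hq =>
        Submodule.mem_colon_singleton.1 hq)
      (Submodule.mapQ _ _ LinearMap.id le_sup_left) where
  injective := by
    refine (injective_iff_map_eq_zero _).2 fun m hm => ?_
    obtain ⟨q, rfl⟩ := Ideal.Quotient.mk_surjective m
    exact Ideal.Quotient.eq_zero_iff_mem.2
      (Submodule.mem_colon_singleton.2 (Ideal.Quotient.eq_zero_iff_mem.1 hm))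
  comp_eq_zero m := by
    obtain ⟨q, rfl⟩ := Ideal.Quotient.mk_surjective m
    exact Ideal.Quotient.eq_zero_iff_mem.2
      (Ideal.mem_sup_right (Ideal.mul_mem_left _ q (Ideal.mem_span_singleton_self _)))
  map_mem_left := by
    rintro e _ ⟨q, hq, rfl⟩
    exact ⟨q * X v, mul_comm (X v) q ▸ h𝓗.X_mul_mem v e q hq, rfl⟩
  map_mem_right := by
    rintro e _ ⟨q, hq, rfl⟩
    exact ⟨q, hq, rfl⟩
  exact := by
    rintro e _ ⟨q, hq, rfl⟩ h
    have hmod : modVar v q ∈ I := hI.mem_sup_span_X_iff.1 (Ideal.Quotient.eq_zero_iff_mem.1 h)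
    rw [modVar_apply, mul_comm] at hmod
    exact ⟨Ideal.Quotient.mk _ (divVar v q), ⟨_, h𝓗.divVar_mem v e q hq, rfl⟩,
      (Ideal.Quotient.eq.2 hmod).symm⟩
  surjective := by
    rintro e _ ⟨q, hq, rfl⟩
    exact ⟨_, ⟨q, hq, rfl⟩, rfl⟩
  raisesDegree := h𝓗.raisesDegree_quotientPiece I L

/-- The three hypotheses control the two outer terms of the long exact sequence of
`0 → R/(I : x_v)(-1) → R/I → R/(I, x_v) → 0` around `H_i(R/(I : x_v))_e`. -/
theorem IsMonomialIdeal.exactAt_colon_X (hI : IsMonomialIdeal K I) (h𝓗 : IsVariableGraded 𝓗)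
    (hv : v ∉ L) (h : ExactAt (quotientPiece 𝓗 I) (varList K (v :: L)) (i + 1) (e + 1))
    (h' : ExactAt (quotientPiece 𝓗 I) (varList K (v :: L)) i e)
    (h'' : ExactAt (quotientPiece 𝓗 I) (varList K (v :: L)) i (e + 1)) :
    ExactAt (quotientPiece 𝓗 (I.colon {X v})) (varList K (v :: L)) i e := by
  have hsup : ExactAt (quotientPiece 𝓗 (I ⊔ Ideal.span {X v})) (varList K (v :: L)) (i + 1)
      (e + 1) := ExactAt.cons_of_smul_eq_zero (smul_quotient_sup_span_X_eq_zero v)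
      (hI.exactAt_sup_span_X h𝓗 hv h)
      (by simpa only [add_sub_cancel_right] using hI.exactAt_sup_span_X h𝓗 hv h')
  have hshift := (hI.gradedShortExact_colon h𝓗 v (v :: L)).exactAt_left hsup h''
  rwa [exactAt_shift, add_sub_cancel_right] at hshift

end Colon

/-! ### Graded modules over a polynomial ring -/

section DegreePiece

variable {σ : Type u} {A : Type v} [CommRing A] {e e' : ℤ} {p q : MvPolynomial σ A}

theorem weight_one_eq_degree (a : σ →₀ ℕ) : Finsupp.weight (1 : σ → ℤ) a = a.degree := by
  simp [Finsupp.weight_apply, Finsupp.sum, Finsupp.degree_apply]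

/-- The homogeneous polynomials of degree `e`, for an integer `e`; for `e < 0` only `0` is one. -/
noncomputable def degreePiece (σ : Type u) (A : Type v) [CommRing A] (e : ℤ) :
    AddSubgroup (MvPolynomial σ A) :=
  (weightedHomogeneousSubmodule A (1 : σ → ℤ) e).toAddSubgroup

/-- The homogeneous component of degree `e` of a polynomial, for an integer `e`. -/
noncomputable def degreeProj (σ : Type u) (A : Type v) [CommRing A] (e : ℤ) :
    MvPolynomial σ A →+ MvPolynomial σ A :=
  (weightedHomogeneousComponent (1 : σ → ℤ) e).toAddMonoidHom

theorem mem_degreePiece : p ∈ degreePiece σ A e ↔ ∀ a, coeff a p ≠ 0 → (a.degree : ℤ) = e := by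
  simp only [← weight_one_eq_degree]
  rfl

theorem mul_mem_degreePiece (hp : p ∈ degreePiece σ A e) (hq : q ∈ degreePiece σ A e') :
    p * q ∈ degreePiece σ A (e + e') :=
  IsWeightedHomogeneous.mul hp hq

theorem X_mem_degreePiece (v : σ) : (X v : MvPolynomial σ A) ∈ degreePiece σ A 1 :=
  isWeightedHomogeneous_X A (1 : σ → ℤ) v

theorem eq_zero_of_mem_degreePiece_of_neg (hp : p ∈ degreePiece σ A e) (he : e < 0) : p = 0 := by
  ext a
  by_contra hc
  have := mem_degreePiece.1 hp a hc
  lia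

theorem isVariableGraded_degreePiece : IsVariableGraded (degreePiece σ A) where
  X_mul_mem v e p hp := by
    simpa only [add_sub_cancel] using mul_mem_degreePiece (X_mem_degreePiece v) hp
  divVar_mem v e p hp := mem_degreePiece.2 fun a ha => by
    have := mem_degreePiece.1 hp _ (coeff_divVar v p a ▸ ha)
    rw [map_add, Finsupp.degree_single] at this
    push_cast at this
    lia

theorem coeff_degreeProj (e : ℤ) (p : MvPolynomial σ A) (a : σ →₀ ℕ) :
    coeff a (degreeProj σ A e p) = if (a.degree : ℤ) = e then coeff a p else 0 := by
  classical
  rw [← weight_one_eq_degree]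
  exact coeff_weightedHomogeneousComponent e p a

theorem homogComp_iff {K σ : Type} [Field K] {e : ℤ} {p : MvPoly K σ} :
    HomogComp K σ e p ↔ p ∈ degreePiece σ K e := by
  rw [HomogComp]
  split_ifs with he
  · rw [mem_homogeneousSubmodule, mem_degreePiece]
    refine forall₂_congr fun a _ => ?_
    rw [Pi.one_def, ← Finsupp.degree_eq_weight_one]
    lia
  · exact ⟨fun h => h ▸ zero_mem _, fun h => eq_zero_of_mem_degreePiece_of_neg h (not_le.1 he)⟩

theorem mem_quotComp_iff {K σ : Type} [Field K] {I : Ideal (MvPoly K σ)} {e : ℤ}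
    {m : MvPoly K σ ⧸ I} : m ∈ QuotComp K σ I e ↔ m ∈ quotientPiece (degreePiece σ K) I e := by
  simp only [quotientPiece, AddSubgroup.mem_map, ← homogComp_iff]
  unfold QuotComp HomogComp
  split_ifs with he
  · exact Iff.rfl
  · simp [eq_comm]

end DegreePiece

/-- A `ℤ`-grading of a module over a polynomial ring. It is encoded by the pieces together with the
projections onto them rather than by a direct sum decomposition, so that it restricts to
submodules and descends to quotients. -/
structure ModuleGrading (σ : Type u) (A : Type v) [CommRing A] (M : Type w) [AddCommGroup M]
    [Module (MvPolynomial σ A) M] where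
  piece : ℤ → AddSubgroup M
  proj : ℤ → M →+ M
  smul_mem : ∀ {d e : ℤ} {p : MvPolynomial σ A} {m : M},
    p ∈ degreePiece σ A d → m ∈ piece e → p • m ∈ piece (d + e)
  proj_mem : ∀ e m, proj e m ∈ piece e
  proj_of_mem : ∀ {e m}, m ∈ piece e → proj e m = m
  proj_of_mem_ne : ∀ {d e m}, m ∈ piece d → d ≠ e → proj e m = 0
  finite_proj : ∀ m, {e | proj e m ≠ 0}.Finite
  ext_proj : ∀ m, (∀ e, proj e m = 0) → m = 0

namespace ModuleGrading

open Koszul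

variable {σ : Type u} {A : Type v} [CommRing A]
  {M : Type w} [AddCommGroup M] [Module (MvPolynomial σ A) M]
  {N : Type*} [AddCommGroup N] [Module (MvPolynomial σ A) N]
  {G : ModuleGrading σ A M} {H : ModuleGrading σ A N} {φ : M →ₗ[MvPolynomial σ A] N}

theorem raisesDegree (G : ModuleGrading σ A M) (L : List σ) :
    RaisesDegree G.piece (varList A L) := by
  intro y hy e m hm
  obtain ⟨v, -, rfl⟩ := List.mem_map.1 hy
  simpa only [add_sub_cancel] using G.smul_mem (X_mem_degreePiece v) hm

theorem proj_sum_of_mem (G : ModuleGrading σ A M) (s : Finset ℤ) {f : ℤ → M}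
    (hf : ∀ d, f d ∈ G.piece d) (e : ℤ) :
    G.proj e (∑ d ∈ s, f d) = if e ∈ s then f e else 0 := by
  rw [map_sum, ← Finset.sum_ite_eq s e f]
  refine Finset.sum_congr rfl fun d _ => ?_
  split_ifs with h
  · rw [h, G.proj_of_mem (hf d)]
  · exact G.proj_of_mem_ne (hf d) (Ne.symm h)

theorem sum_proj (G : ModuleGrading σ A M) (m : M) :
    ∑ e ∈ (G.finite_proj m).toFinset, G.proj e m = m := by
  refine sub_eq_zero.1 (G.ext_proj _ fun e => ?_)
  rw [map_sub, G.proj_sum_of_mem _ fun d => G.proj_mem d m, sub_eq_zero, ite_eq_left_iff]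
  intro he
  simpa [eq_comm] using he

theorem mem_of_forall_proj_mem (G : ModuleGrading σ A M) {Z : Submodule (MvPolynomial σ A) M}
    {m : M} (h : ∀ e, G.proj e m ∈ Z) : m ∈ Z := by
  rw [← G.sum_proj m]
  exact sum_mem fun e _ => h e

/-- `φ` is a homomorphism of graded modules, of degree zero. -/
def IsGradedHom (G : ModuleGrading σ A M) (H : ModuleGrading σ A N)
    (φ : M →ₗ[MvPolynomial σ A] N) : Prop :=
  ∀ e, ∀ m ∈ G.piece e, φ m ∈ H.piece e

theorem IsGradedHom.map_proj (hφ : G.IsGradedHom H φ) (e : ℤ) (m : M) :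
    φ (G.proj e m) = H.proj e (φ m) := by
  conv_rhs => rw [← G.sum_proj m, map_sum]
  rw [H.proj_sum_of_mem _ fun d => hφ d _ (G.proj_mem d m), eq_comm, ite_eq_left_iff]
  intro he
  rw [show G.proj e m = 0 by simpa using he, map_zero]

/-- `Z` is a graded submodule: it contains the homogeneous components of its elements. -/
def IsGraded (G : ModuleGrading σ A M) (Z : Submodule (MvPolynomial σ A) M) : Prop :=
  ∀ e, ∀ z ∈ Z, G.proj e z ∈ Z

theorem IsGradedHom.isGraded_ker (hφ : G.IsGradedHom H φ) : G.IsGraded (LinearMap.ker φ) := by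
  intro e z hz
  rw [LinearMap.mem_ker, hφ.map_proj, LinearMap.mem_ker.1 hz, map_zero]

theorem IsGradedHom.isGraded_range (hφ : G.IsGradedHom H φ) : H.IsGraded (LinearMap.range φ) := by
  rintro e _ ⟨m, rfl⟩
  exact ⟨G.proj e m, hφ.map_proj e m⟩

/-- The induced grading on a graded submodule. -/
noncomputable def restrict (G : ModuleGrading σ A M) {Z : Submodule (MvPolynomial σ A) M}
    (hZ : G.IsGraded Z) : ModuleGrading σ A Z where
  piece e := (G.piece e).comap Z.subtype.toAddMonoidHom
  proj e := ((G.proj e).comp Z.subtype.toAddMonoidHom).codRestrict Z fun z => hZ e z z.2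
  smul_mem hp hm := G.smul_mem hp hm
  proj_mem e m := G.proj_mem e m
  proj_of_mem hm := Subtype.ext (G.proj_of_mem hm)
  proj_of_mem_ne hm he := Subtype.ext (G.proj_of_mem_ne hm he)
  finite_proj m := (G.finite_proj m).subset fun _ he h => he (Subtype.ext h)
  ext_proj m h := Subtype.ext (G.ext_proj m fun e => congrArg Subtype.val (h e))

/-- The induced grading on the quotient by a graded submodule. -/
noncomputable def quotient (G : ModuleGrading σ A M) {Z : Submodule (MvPolynomial σ A) M}
    (hZ : G.IsGraded Z) : ModuleGrading σ A (M ⧸ Z) where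
  piece e := (G.piece e).map Z.mkQ.toAddMonoidHom
  proj e := QuotientAddGroup.map _ _ (G.proj e) (hZ e)
  smul_mem := by
    rintro d e p _ hp ⟨m, hm, rfl⟩
    exact ⟨p • m, G.smul_mem hp hm, rfl⟩
  proj_mem e m := by
    obtain ⟨m, rfl⟩ := Z.mkQ_surjective m
    exact ⟨_, G.proj_mem e m, rfl⟩
  proj_of_mem := by
    rintro e _ ⟨m, hm, rfl⟩
    exact congrArg Z.mkQ (G.proj_of_mem hm)
  proj_of_mem_ne := by
    rintro d e _ ⟨m, hm, rfl⟩ he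
    exact (congrArg Z.mkQ (G.proj_of_mem_ne hm he)).trans (map_zero _)
  finite_proj m := by
    obtain ⟨m, rfl⟩ := Z.mkQ_surjective m
    refine (G.finite_proj m).subset fun e he h => he ?_
    exact (congrArg Z.mkQ h).trans (map_zero _)
  ext_proj m h := by
    obtain ⟨m, rfl⟩ := Z.mkQ_surjective m
    exact (Submodule.Quotient.mk_eq_zero Z).2 (G.mem_of_forall_proj_mem fun e =>
      (Submodule.Quotient.mk_eq_zero Z).1 (h e))

theorem IsGradedHom.gradedShortExact (hφ : G.IsGradedHom H φ) (hs : Function.Surjective φ)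
    {Z : Submodule (MvPolynomial σ A) M} (hZ : G.IsGraded Z) (hker : LinearMap.ker φ = Z)
    (L : List σ) :
    GradedShortExact (varList A L) (G.restrict hZ).piece G.piece H.piece Z.subtype φ where
  injective := Subtype.val_injective
  comp_eq_zero m := (hker.ge m.2 : φ m = 0)
  map_mem_left _ _ hm := hm
  map_mem_right := hφ
  exact _ m hm h := ⟨⟨m, hker.le h⟩, hm, rfl⟩
  surjective e m hm := by
    obtain ⟨a, rfl⟩ := hs m
    exact ⟨G.proj e a, G.proj_mem e a, (hφ.map_proj e a).trans (H.proj_of_mem hm)⟩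
  raisesDegree := G.raisesDegree L

/-- The grading of the polynomial ring by degree. -/
noncomputable def degree (σ : Type u) (A : Type v) [CommRing A] :
    ModuleGrading σ A (MvPolynomial σ A) where
  piece := degreePiece σ A
  proj := degreeProj σ A
  smul_mem := mul_mem_degreePiece
  proj_mem e p := weightedHomogeneousComponent_isWeightedHomogeneous e p
  proj_of_mem hp := IsWeightedHomogeneous.weightedHomogeneousComponent_same hp
  proj_of_mem_ne hp h := IsWeightedHomogeneous.weightedHomogeneousComponent_ne _ hp h.symm
  finite_proj p := weightedHomogeneousComponent_finsupp p
  ext_proj p h := by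
    ext a
    simpa only [coeff_degreeProj, if_pos, coeff_zero] using congrArg (coeff a) (h a.degree)

section Free

variable {ι : Type*} [Finite ι] {dg : ι → ℤ} {L : List σ} {i e : ℤ}

/-- The grading of the free module `⊕_j R(-dg j)`. -/
noncomputable def free (A : Type v) [CommRing A] (σ : Type u) (dg : ι → ℤ) :
    ModuleGrading σ A (ι → MvPolynomial σ A) where
  piece e := AddSubgroup.pi Set.univ fun j => degreePiece σ A (e - dg j)
  proj e := AddMonoidHom.pi fun j => (degreeProj σ A (e - dg j)).comp (Pi.evalAddMonoidHom _ j)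
  smul_mem {d e p f} hp hf j hj := by
    have := mul_mem_degreePiece hp (hf j hj)
    rwa [← add_sub_assoc] at this
  proj_mem e f j _ := (degree σ A).proj_mem _ (f j)
  proj_of_mem hf := funext fun j => (degree σ A).proj_of_mem (hf j trivial)
  proj_of_mem_ne hf he := funext fun j =>
    (degree σ A).proj_of_mem_ne (hf j trivial) fun h => he (sub_left_injective h)
  finite_proj f := by
    refine (Set.finite_iUnion fun j =>
      ((degree σ A).finite_proj (f j)).image fun e => e + dg j).subset fun e he => ?_
    obtain ⟨j, hj⟩ := Function.ne_iff.1 he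
    exact Set.mem_iUnion.2 ⟨j, e - dg j, hj, sub_add_cancel _ _⟩
  ext_proj f h := funext fun j => (degree σ A).ext_proj _ fun e => by
    have : degreeProj σ A (e + dg j - dg j) (f j) = 0 := congrFun (h (e + dg j)) j
    rwa [add_sub_cancel_right] at this

theorem mem_piece_free {f : ι → MvPolynomial σ A} :
    f ∈ (free A σ dg).piece e ↔ ∀ j, f j ∈ degreePiece σ A (e - dg j) := by
  simp [free, AddSubgroup.mem_pi]

theorem isHomogVec_iff {K σ : Type} [Field K] {m : ℕ} {dg : Fin m → ℤ}
    {f : Fin m → MvPoly K σ} : IsHomogVec K σ dg e f ↔ f ∈ (free K σ dg).piece e :=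
  (forall_congr' fun _ => homogComp_iff).trans mem_piece_free.symm

theorem exactAt_free_of_pos [Nontrivial A] (hL : L.Nodup) (hi : 0 < i) :
    ExactAt (free A σ dg).piece (varList A L) i e := by
  refine exactAt_of_pos_of_forall_exists_leftInverse (hL.map X_injective)
    ((free A σ dg).raisesDegree L) (fun x hx => ?_) hi
  obtain ⟨v, -, rfl⟩ := List.mem_map.1 hx
  refine ⟨AddMonoidHom.pi fun j => (divVar v).comp (Pi.evalAddMonoidHom _ j),
    fun f => funext fun j => divVar_X_mul v (f j), fun e f hf => mem_piece_free.2 fun j => ?_, ?_⟩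
  · rw [sub_right_comm]
    exact isVariableGraded_degreePiece.divVar_mem v _ _ (mem_piece_free.1 hf j)
  · intro y hy hne f
    obtain ⟨w, -, rfl⟩ := List.mem_map.1 hy
    exact funext fun j => divVar_X_mul_of_ne (fun h => hne (congrArg X h)) (f j)

/-- The terms divisible by each variable of `L` are split off in turn. -/
theorem mem_decomposables_free {f : ι → MvPolynomial σ A} (hf : f ∈ (free A σ dg).piece e)
    (h : ∀ j, ∀ a ∈ (f j).support, ∃ w ∈ L, a w ≠ 0) :
    f ∈ decomposables (free A σ dg).piece (varList A L) e := by
  induction L generalizing f with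
  | nil =>
    have : f = 0 := funext fun j => by
      ext a
      by_contra hc
      obtain ⟨w, hw, -⟩ := h j a (mem_support_iff.2 hc)
      exact List.not_mem_nil hw
    exact this ▸ zero_mem _
  | cons v L ih =>
    refine mem_decomposables_cons.2 ⟨fun j => divVar v (f j), mem_piece_free.2 fun j => ?_,
      ih (mem_piece_free.2 fun j => ?_) fun j a ha => ?_⟩
    · rw [sub_right_comm]
      exact isVariableGraded_degreePiece.divVar_mem v _ _ (mem_piece_free.1 hf j)
    · exact isVariableGraded_degreePiece.modVar_mem v (mem_piece_free.1 hf j)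
    · have hcoeff : coeff a (modVar v (f j)) ≠ 0 := mem_support_iff.1 ha
      rw [coeff_modVar, ite_ne_right_iff] at hcoeff
      obtain ⟨w, hw, hwa⟩ := h j a (mem_support_iff.2 hcoeff.2)
      exact ⟨w, (List.mem_cons.1 hw).resolve_left fun h => hwa (h ▸ hcoeff.1), hwa⟩

theorem exactAt_free [Nontrivial A] (hL : L.Nodup) (hL' : ∀ v, v ∈ L)
    (h : i = 0 → ∀ j, dg j < e) : ExactAt (free A σ dg).piece (varList A L) i e := by
  rcases lt_trichotomy i 0 with hi | rfl | hi
  · exact exactAt_of_neg hi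
  · refine exactAt_zero_iff.2 fun f hf => mem_decomposables_free hf fun j a ha => ?_
    by_contra! ha0
    have hdeg := mem_degreePiece.1 (mem_piece_free.1 hf j) a (mem_support_iff.1 ha)
    rw [show a = 0 from Finsupp.ext fun w => ha0 w (hL' w), map_zero] at hdeg
    exact (sub_pos.2 (h rfl j)).ne hdeg
  · exact exactAt_free_of_pos hL hi

end Free

end ModuleGrading

/-! ### Regularity of graded modules -/

namespace ModuleGrading

open Koszul

variable {σ : Type u} {A : Type v} [CommRing A]
  {M : Type w} [AddCommGroup M] [Module (MvPolynomial σ A) M]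
  {L : List σ} {s : ℤ}

/-- There is a graded surjection from a free module `⊕_{j < m} R(-dg j)` onto the graded module `G`,
with twists `dg j` satisfying `P`. -/
def HasFreeCover (G : ModuleGrading σ A M) (P : ℤ → Prop) : Prop :=
  ∃ (m : ℕ) (dg : Fin m → ℤ) (φ : (Fin m → MvPolynomial σ A) →ₗ[MvPolynomial σ A] M),
    Function.Surjective φ ∧ (free A σ dg).IsGradedHom G φ ∧ ∀ j, P (dg j)

theorem isGradedHom_linearCombination {ι : Type*} [Fintype ι] (G : ModuleGrading σ A M)
    {dg : ι → ℤ} {f : ι → M} (hf : ∀ j, f j ∈ G.piece (dg j)) :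
    (free A σ dg).IsGradedHom G (Fintype.linearCombination (MvPolynomial σ A) f) := by
  intro e p hp
  rw [Fintype.linearCombination_apply]
  refine sum_mem fun j _ => ?_
  simpa only [sub_add_cancel] using G.smul_mem (mem_piece_free.1 hp j) (hf j)

theorem hasFreeCover_of_span_eq_top [Module.Finite (MvPolynomial σ A) M] (G : ModuleGrading σ A M)
    {P : ℤ → Prop}
    (h : Submodule.span (MvPolynomial σ A) {m : M | ∃ e, P e ∧ m ∈ G.piece e} = ⊤) :
    G.HasFreeCover P := by
  have hfg := h ▸ Module.Finite.fg_top (R := MvPolynomial σ A) (M := M)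
  obtain ⟨T, hT, hspan⟩ := (Submodule.fg_span_iff_fg_span_finset_subset _).1 hfg
  choose d hd using fun j => hT (T.equivFin.symm j).2
  refine ⟨T.card, d, Fintype.linearCombination _ fun j => (T.equivFin.symm j : M), ?_,
    G.isGradedHom_linearCombination fun j => (hd j).2, fun j => (hd j).1⟩
  rw [← LinearMap.range_eq_top, Fintype.range_linearCombination, ← h, hspan]
  congr 1
  exact (T.equivFin.symm.surjective.range_comp Subtype.val).trans Subtype.range_coe

theorem hasFreeCover [Module.Finite (MvPolynomial σ A) M] (G : ModuleGrading σ A M) :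
    G.HasFreeCover fun _ => True :=
  G.hasFreeCover_of_span_eq_top <| eq_top_iff.2 fun m _ => G.mem_of_forall_proj_mem fun e =>
    Submodule.subset_span ⟨e, trivial, G.proj_mem e m⟩

theorem exists_forall_piece_eq_bot [Module.Finite (MvPolynomial σ A) M] (G : ModuleGrading σ A M) :
    ∃ b, ∀ e < b, G.piece e = ⊥ := by
  obtain ⟨m, dg, φ, hs, hφ, -⟩ := G.hasFreeCover
  obtain ⟨b, hb⟩ := (Set.finite_range dg).bddBelow
  refine ⟨b, fun e he => (AddSubgroup.eq_bot_iff_forall _).2 fun x hx => ?_⟩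
  obtain ⟨f, rfl⟩ := hs x
  have hf : (free A σ dg).proj e f = 0 := funext fun j =>
    eq_zero_of_mem_degreePiece_of_neg (mem_piece_free.1 ((free A σ dg).proj_mem e f) j)
      (sub_neg.2 (he.trans_le (hb ⟨j, rfl⟩)))
  rw [← G.proj_of_mem hx, ← hφ.map_proj, hf, map_zero]

/-- Graded Nakayama lemma. -/
theorem hasFreeCover_le [Module.Finite (MvPolynomial σ A) M] (G : ModuleGrading σ A M)
    (h : ∀ e, s < e → ExactAt G.piece (varList A L) 0 e) : G.HasFreeCover (· ≤ s) := by
  obtain ⟨b, hb⟩ := G.exists_forall_piece_eq_bot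
  set Z := Submodule.span (MvPolynomial σ A) {m : M | ∃ e, e ≤ s ∧ m ∈ G.piece e}
  have hZ : ∀ k : ℕ, ∀ e < b + k, G.piece e ≤ Z.toAddSubgroup := by
    intro k
    induction k with
    | zero => exact fun e he => (hb e (by simpa using he)).trans_le bot_le
    | succ k ih =>
      intro e he
      rcases le_or_gt e s with hes | hes
      · exact fun m hm => Submodule.subset_span ⟨e, hes, hm⟩
      · refine (exactAt_zero_iff.1 (h e hes)).trans (iSup₂_le fun x _ => ?_)
        rintro _ ⟨m, hm, rfl⟩
        exact Z.smul_mem x (ih (e - 1) (by push_cast at he; lia) hm)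
  exact G.hasFreeCover_of_span_eq_top <| eq_top_iff.2 fun m _ => G.mem_of_forall_proj_mem fun e =>
    hZ (e - b + 1).toNat e (by lia) (G.proj_mem e m)

/-- The Koszul homology `H_i(L; M)` vanishes in degrees above `i + s`. For a finite module over a
field and a list `L` of all the variables, this says that the regularity is at most `s`. -/
def RegularityLE (G : ModuleGrading σ A M) (L : List σ) (s : ℤ) : Prop :=
  ∀ i e : ℤ, i + s < e → ExactAt G.piece (varList A L) i e

section Bound

variable [Nontrivial A]

theorem exists_forall_exactAt [IsNoetherianRing (MvPolynomial σ A)] (hL : L.Nodup)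
    (hL' : ∀ v, v ∈ L) (i : ℕ) {M : Type max u v} [AddCommGroup M] [Module (MvPolynomial σ A) M]
    [Module.Finite (MvPolynomial σ A) M] (G : ModuleGrading σ A M) :
    ∃ B : ℤ, ∀ e, B < e → ExactAt G.piece (varList A L) i e := by
  induction i generalizing M with
  | zero =>
    obtain ⟨m, dg, φ, hs, hφ, -⟩ := G.hasFreeCover
    obtain ⟨B, hB⟩ := (Set.finite_range dg).bddAbove
    exact ⟨B, fun e he => (hφ.gradedShortExact hs hφ.isGraded_ker rfl L).exactAt_right
      (exactAt_of_neg (by simp)) (exactAt_free hL hL' fun _ j => (hB ⟨j, rfl⟩).trans_lt he)⟩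
  | succ i ih =>
    obtain ⟨m, dg, φ, hs, hφ, -⟩ := G.hasFreeCover
    obtain ⟨B, hB⟩ := ih ((free A σ dg).restrict hφ.isGraded_ker)
    exact ⟨B, fun e he => (hφ.gradedShortExact hs hφ.isGraded_ker rfl L).exactAt_right
      (by simpa using hB e he) (exactAt_free hL hL' fun h => by lia)⟩

theorem exists_regularityLE [IsNoetherianRing (MvPolynomial σ A)] (hL : L.Nodup)
    (hL' : ∀ v, v ∈ L) {M : Type max u v} [AddCommGroup M] [Module (MvPolynomial σ A) M]
    [Module.Finite (MvPolynomial σ A) M] (G : ModuleGrading σ A M) :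
    ∃ s, G.RegularityLE L s := by
  choose B hB using fun i : ℕ => G.exists_forall_exactAt hL hL' i
  obtain ⟨s, hs⟩ := ((Set.finite_le_nat L.length).image fun i => B i - i).bddAbove
  refine ⟨s, fun i e he => ?_⟩
  rcases lt_or_ge i 0 with hi | hi
  · exact exactAt_of_neg hi
  lift i to ℕ using hi
  rcases le_or_gt i L.length with hi' | hi'
  · have : B i - i ≤ s := hs ⟨i, hi', rfl⟩
    exact hB i e (by lia)
  · exact exactAt_of_length_lt (by simpa using hi')

variable {G : ModuleGrading σ A M} {m : ℕ} {dg : Fin m → ℤ}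
  {φ : (Fin m → MvPolynomial σ A) →ₗ[MvPolynomial σ A] M}

theorem RegularityLE.restrict_ker (hG : G.RegularityLE L s) (hL : L.Nodup) (hL' : ∀ v, v ∈ L)
    (hs : Function.Surjective φ) (hφ : (free A σ dg).IsGradedHom G φ) (hdg : ∀ j, dg j ≤ s) :
    ((free A σ dg).restrict hφ.isGraded_ker).RegularityLE L (s + 1) := fun i e hie =>
  (hφ.gradedShortExact hs hφ.isGraded_ker rfl L).exactAt_left (hG _ _ (by lia))
    (exactAt_free hL hL' fun hi j => (hdg j).trans_lt (by lia))

end Bound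

end ModuleGrading

/-! ### Regularity and graded free resolutions -/

section Resolution

open Koszul ModuleGrading

variable {K σ : Type} [Field K] {I : Ideal (MvPoly K σ)} {L : List σ} {s : ℤ}

theorem GradedFreeRes.isGradedHom_dmap (F : GradedFreeRes K σ I) (t : ℕ) :
    (free K σ (F.dg (t + 1))).IsGradedHom (free K σ (F.dg t)) (F.dmap t) := fun e f hf =>
  isHomogVec_iff.1 (F.graded t e f (isHomogVec_iff.2 hf))

/-- Dimension shifting along the resolution. The homological degree is `k - 1` to let the induction
start at a vanishing group. -/
theorem GradedFreeRes.exactAt_range_dmap (F : GradedFreeRes K σ I)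
    (hF : ∀ i j, F.dg i j - i ≤ s) (hL : L.Nodup) (hL' : ∀ v, v ∈ L) (k t : ℕ) {e : ℤ}
    (he : k + s + t < e) :
    ExactAt ((free K σ (F.dg t)).restrict (F.isGradedHom_dmap t).isGraded_range).piece
      (varList K L) (k - 1) e := by
  induction k generalizing t with
  | zero => exact exactAt_of_neg (by simp)
  | succ k ih =>
    have hφ : (free K σ (F.dg (t + 1))).IsGradedHom
        ((free K σ (F.dg t)).restrict (F.isGradedHom_dmap t).isGraded_range)
        (F.dmap t).rangeRestrict := F.isGradedHom_dmap t
    have hker : LinearMap.ker (F.dmap t).rangeRestrict = LinearMap.range (F.dmap (t + 1)) :=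
      (LinearMap.ker_rangeRestrict _).trans (LinearMap.exact_iff.1 (F.exactS t))
    refine (hφ.gradedShortExact (LinearMap.surjective_rangeRestrict _)
      (F.isGradedHom_dmap (t + 1)).isGraded_range hker L).exactAt_right ?_
      (exactAt_free hL hL' fun hk j => ?_)
    · simpa using ih (t + 1) (by push_cast at he ⊢; lia)
    · have := hF (t + 1) j
      push_cast at this he hk
      lia

theorem ResBound.regularityLE (h : ResBound K σ I s) (hI : (degree σ K).IsGraded I)
    (hL : L.Nodup) (hL' : ∀ v, v ∈ L) : ((degree σ K).quotient hI).RegularityLE L s := by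
  obtain ⟨F, hF⟩ := h
  intro i e hie
  rcases lt_or_ge i 0 with hi | hi
  · exact exactAt_of_neg hi
  lift i to ℕ using hi
  have hφ : (free K σ (F.dg 0)).IsGradedHom ((degree σ K).quotient hI) F.aug := fun e f hf =>
    mem_quotComp_iff.1 (F.aug_graded e f (isHomogVec_iff.2 hf))
  refine (hφ.gradedShortExact F.aug_surj (F.isGradedHom_dmap 0).isGraded_range
    (LinearMap.exact_iff.1 F.exact0) L).exactAt_right
    (F.exactAt_range_dmap hF hL hL' i 0 (by simpa using hie))
    (exactAt_free hL hL' fun hi j => ?_)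
  have := hF 0 j
  push_cast at this
  lia

end Resolution

/-- A graded submodule of a graded free module `⊕_j R(-dg j)`. -/
structure SyzygyModule (σ : Type u) (A : Type v) [CommRing A] where
  rank : ℕ
  dg : Fin rank → ℤ
  toSubmodule : Submodule (MvPolynomial σ A) (Fin rank → MvPolynomial σ A)
  isGraded : (ModuleGrading.free A σ dg).IsGraded toSubmodule

namespace SyzygyModule

open Koszul ModuleGrading

variable {σ : Type u} {A : Type v} [CommRing A] {L : List σ} {r s : ℤ}

/-- The grading induced by the ambient free module. -/
noncomputable def grading (S : SyzygyModule σ A) : ModuleGrading σ A S.toSubmodule :=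
  (free A σ S.dg).restrict S.isGraded

/-- `S` is the kernel of the graded homomorphism `φ` to `G`, and the generators of the free module
that `φ` is defined on have degree at most `r`. -/
structure IsKernelOf (S : SyzygyModule σ A) {M : Type w} [AddCommGroup M]
    [Module (MvPolynomial σ A) M] (G : ModuleGrading σ A M) (r : ℤ)
    (φ : (Fin S.rank → MvPolynomial σ A) →ₗ[MvPolynomial σ A] M) : Prop where
  isGradedHom : (free A σ S.dg).IsGradedHom G φ
  ker_eq : LinearMap.ker φ = S.toSubmodule
  dg_le : ∀ j, S.dg j ≤ r

variable [Nontrivial A]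

theorem exists_isKernelOf {M : Type w} [AddCommGroup M] [Module (MvPolynomial σ A) M]
    [Module.Finite (MvPolynomial σ A) M] {G : ModuleGrading σ A M} (hG : G.RegularityLE L r)
    (hL : L.Nodup) (hL' : ∀ v, v ∈ L) :
    ∃ S : SyzygyModule σ A, S.grading.RegularityLE L (r + 1) ∧
      ∃ φ, S.IsKernelOf G r φ ∧ Function.Surjective φ := by
  obtain ⟨m, dg, φ, hs, hφ, hdg⟩ := G.hasFreeCover_le fun e he => hG 0 e (by simpa using he)
  exact ⟨⟨m, dg, LinearMap.ker φ, hφ.isGraded_ker⟩, hG.restrict_ker hL hL' hs hφ hdg, φ,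
    ⟨hφ, rfl, hdg⟩, hs⟩

theorem exists_next [IsNoetherianRing (MvPolynomial σ A)] {S : SyzygyModule σ A}
    (hS : S.grading.RegularityLE L r) (hL : L.Nodup) (hL' : ∀ v, v ∈ L) :
    ∃ S' : SyzygyModule σ A, S'.grading.RegularityLE L (r + 1) ∧
      ∃ φ, S'.IsKernelOf (free A σ S.dg) r φ ∧ LinearMap.range φ = S.toSubmodule := by
  obtain ⟨S', hS', φ, hφ, hs⟩ := exists_isKernelOf hS hL hL'
  refine ⟨S', hS', S.toSubmodule.subtype.comp φ, ⟨hφ.isGradedHom, ?_, hφ.dg_le⟩, ?_⟩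
  · rw [LinearMap.ker_comp_of_ker_eq_bot _ (Submodule.ker_subtype _), hφ.ker_eq]
  · rw [LinearMap.range_comp_of_range_eq_top _ (LinearMap.range_eq_top.2 hs),
      Submodule.range_subtype]

end SyzygyModule

theorem exists_seq_of_forall_exists_succ {α : Type*} {p : ℕ → α → Prop} {r : ℕ → α → α → Prop}
    {a : α} (ha : p 0 a) (h : ∀ n a, p n a → ∃ b, p (n + 1) b ∧ r n a b) :
    ∃ f : ℕ → α, f 0 = a ∧ ∀ n, r n (f n) (f (n + 1)) := by
  choose g hg hr using h
  let f : ∀ n, {a // p n a} := Nat.rec ⟨a, ha⟩ fun n a => ⟨g n a a.2, hg n a a.2⟩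
  exact ⟨fun n => (f n).1, rfl, fun n => hr n (f n).1 (f n).2⟩

section Resolution

open Koszul ModuleGrading

variable {K σ : Type} [Field K] {I : Ideal (MvPoly K σ)} {L : List σ} {s : ℤ}

theorem resBound_of_regularityLE [Finite σ] {hI : (degree σ K).IsGraded I}
    (h : ((degree σ K).quotient hI).RegularityLE L s) (hL : L.Nodup) (hL' : ∀ v, v ∈ L) :
    ResBound K σ I s := by
  obtain ⟨S₀, hS₀, ε, hε, hsε⟩ := SyzygyModule.exists_isKernelOf h hL hL'
  obtain ⟨S, rfl, hS⟩ := exists_seq_of_forall_exists_succ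
    (p := fun t (S : SyzygyModule σ K) => S.grading.RegularityLE L (s + 1 + t))
    (by simpa using hS₀) fun t S hS => by
      simpa only [Nat.cast_succ, ← add_assoc] using SyzygyModule.exists_next hS hL hL'
  choose φ hφ hrange using hS
  refine ⟨{ rk := fun t => (S t).rank
            dg := fun t => (S t).dg
            dmap := φ
            aug := ε
            aug_surj := hsε
            exact0 := LinearMap.exact_iff.2 (hε.ker_eq.trans (hrange 0).symm)
            exactS := fun t => LinearMap.exact_iff.2 ((hφ t).ker_eq.trans (hrange (t + 1)).symm)
            graded := fun t e f hf => isHomogVec_iff.2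
              ((hφ t).isGradedHom e f (isHomogVec_iff.1 hf))
            aug_graded := fun e f hf => mem_quotComp_iff.2
              (hε.isGradedHom e f (isHomogVec_iff.1 hf)) }, ?_⟩
  rintro (_ | t) j
  · simpa using hε.dg_le j
  · have := (hφ t).dg_le j
    push_cast
    lia

theorem resBound_iff_regularityLE [Finite σ] (hI : (degree σ K).IsGraded I) (hL : L.Nodup)
    (hL' : ∀ v, v ∈ L) : ResBound K σ I s ↔ ((degree σ K).quotient hI).RegularityLE L s :=
  ⟨fun h => h.regularityLE hI hL hL', fun h => resBound_of_regularityLE h hL hL'⟩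

theorem exists_resBound [Finite σ] (hI : (degree σ K).IsGraded I) : ∃ s, ResBound K σ I s := by
  have := Fintype.ofFinite σ
  have hL : (Finset.univ : Finset σ).toList.Nodup := Finset.nodup_toList _
  have hL' : ∀ v : σ, v ∈ Finset.univ.toList := fun v => Finset.mem_toList.2 (Finset.mem_univ v)
  obtain ⟨s, hs⟩ := ((degree σ K).quotient hI).exists_regularityLE hL hL'
  exact ⟨s, resBound_of_regularityLE hs hL hL'⟩

/-- `CMreg` is `⊥` if there is no least bound, so the point is that a least bound for `J` gives one
for `I`. -/
theorem cmreg_le_of_forall_resBound [Finite σ] {J : Ideal (MvPoly K σ)}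
    (hI : (degree σ K).IsGraded I) (h : ∀ s, ResBound K σ I s → ResBound K σ J s) :
    CMreg K σ J ≤ CMreg K σ I := by
  by_cases hJ : ∃ r : ℤ, ResBound K σ J r ∧ ∀ s : ℤ, ResBound K σ J s → r ≤ s
  · have hI' : ∃ r : ℤ, ResBound K σ I r ∧ ∀ s : ℤ, ResBound K σ I s → r ≤ s :=
      Int.exists_least_of_bdd (hJ.imp fun r hr z hz => hr.2 z (h z hz)) (exists_resBound hI)
    rw [CMreg, CMreg, dif_pos hJ, dif_pos hI', WithBot.coe_le_coe]
    exact hJ.choose_spec.2 _ (h _ hI'.choose_spec.1)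
  · rw [CMreg, dif_neg hJ]
    exact bot_le

end Resolution

section MonomialRegularity

open Koszul ModuleGrading

variable {K : Type} [Field K] {n : ℕ} {I : Ideal (MvPoly K (Fin n))} {s : ℤ}

theorem IsMonomialIdeal.isGraded (hI : IsMonomialIdeal K I) : (degree (Fin n) K).IsGraded I := by
  refine fun e p hp => hI.mem_of_support_subset hp fun a ha => mem_support_iff.2 fun h => ?_
  have := mem_support_iff.1 ha
  exact this (by rw [degree, coeff_degreeProj, h, ite_self])

theorem exists_cons_nodup_forall_mem {σ : Type*} [Finite σ] (v : σ) :
    ∃ L : List σ, (v :: L).Nodup ∧ ∀ w, w ∈ v :: L := by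
  classical
  have := Fintype.ofFinite σ
  refine ⟨(Finset.univ.erase v).toList, ?_, fun w => ?_⟩
  · simp [Finset.nodup_toList]
  · simp [em]

theorem IsMonomialIdeal.resBound_colon_X (hI : IsMonomialIdeal K I) (v : Fin n)
    (h : ResBound K (Fin n) I s) : ResBound K (Fin n) (I.colon {X v}) s := by
  obtain ⟨L, hL, hL'⟩ := exists_cons_nodup_forall_mem v
  rw [resBound_iff_regularityLE hI.isGraded hL hL'] at h
  rw [resBound_iff_regularityLE (hI.colon_X v).isGraded hL hL']
  exact fun i e hie => hI.exactAt_colon_X isVariableGraded_degreePiece (List.nodup_cons.1 hL).1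
    (h _ _ (by lia)) (h _ _ (by lia)) (h _ _ (by lia))

theorem IsMonomialIdeal.cmreg_colon_X_le (hI : IsMonomialIdeal K I) (v : Fin n) :
    CMreg K (Fin n) (I.colon {X v}) ≤ CMreg K (Fin n) I :=
  cmreg_le_of_forall_resBound hI.isGraded fun _ => hI.resBound_colon_X v

end MonomialRegularity

/-! ### Vanishing of Ext -/

section DerivedExt

variable {C : Type u} [Category.{v} C] [Abelian C] {R : Type w} [Ring R] [Linear R C]
  [EnoughProjectives C] {X Y : C}

/-- In degree `i = 0` the index `j` is `0`, and `P.complex.d 0 0 = 0`. -/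
theorem subsingleton_derivedExt_iff (P : ProjectiveResolution X) {i j : ℕ}
    (hij : (ComplexShape.up ℕ).prev i = j) :
    Subsingleton (((Ext R C i).obj (op X)).obj Y) ↔
      ∀ f : P.complex.X i ⟶ Y, P.complex.d (i + 1) i ≫ f = 0 →
        ∃ g : P.complex.X j ⟶ Y, P.complex.d i j ≫ g = f := by
  rw [← ModuleCat.isZero_iff_subsingleton, (P.isoExt (R := R) i Y).isZero_iff,
    ← HomologicalComplex.exactAt_iff_isZero_homology,
    HomologicalComplex.exactAt_iff' _ j i (i + 1) hij (by simp), ShortComplex.moduleCat_exact_iff]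
  exact Iff.rfl

theorem subsingleton_derivedExt_zero_iff :
    Subsingleton (((Ext R C 0).obj (op X)).obj Y) ↔ Subsingleton (X ⟶ Y) := by
  let P := projectiveResolution X
  rw [subsingleton_derivedExt_iff P (j := 0) (by simp)]
  constructor
  · intro h
    have eq_zero (f : ((ChainComplex.single₀ C).obj X).X 0 ⟶ Y) : f = 0 := by
      obtain ⟨g, hg⟩ := h (P.π.f 0 ≫ f) (by
        rw [← Category.assoc, P.complex_d_comp_π_f_zero, Limits.zero_comp])
      rw [P.complex.shape 0 0 (by simp), Limits.zero_comp] at hg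
      rw [← cancel_epi (P.π.f 0), ← hg, Limits.comp_zero]
    exact subsingleton_of_forall_eq 0 eq_zero
  · intro h f hf
    have hdesc : P.exact₀.desc f hf = 0 := h.elim _ _
    refine ⟨0, ?_⟩
    rw [Limits.comp_zero, ← P.exact₀.g_desc f hf, hdesc, Limits.comp_zero]

theorem subsingleton_derivedExt_iff_subsingleton_ext [HasExt.{v} C] (i : ℕ) :
    Subsingleton (((Ext R C i).obj (op X)).obj Y) ↔ Subsingleton (Abelian.Ext X Y i) := by
  cases i with
  | zero => rw [subsingleton_derivedExt_zero_iff, Abelian.Ext.homEquiv₀.subsingleton_congr]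
  | succ i =>
    let P := projectiveResolution X
    rw [subsingleton_derivedExt_iff P (j := i) (by simp)]
    constructor
    · intro h
      refine subsingleton_of_forall_eq 0 fun a => ?_
      obtain ⟨f, hf, rfl⟩ := P.extMk_surjective a (i + 1 + 1) rfl
      exact (P.extMk_eq_zero_iff f _ rfl hf i rfl).2 (h f hf)
    · intro h f hf
      exact (P.extMk_eq_zero_iff f _ rfl hf i rfl).1 (h.elim _ _)

end DerivedExt

section DimensionShifting

open Abelian

variable {C : Type u} [Category.{v} C] [Abelian C]

theorem exists_shortExact_injective [EnoughInjectives C] (M : C) :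
    ∃ S : ShortComplex C, S.ShortExact ∧ Injective S.X₂ ∧ S.X₁ = M :=
  ⟨ShortComplex.mk (Injective.ι M) (Limits.cokernel.π _) (Limits.cokernel.condition _),
    { exact := ShortComplex.exact_cokernel _
      mono_f := inferInstanceAs (Mono (Injective.ι M))
      epi_g := inferInstanceAs (Epi (Limits.cokernel.π (Injective.ι M))) },
    inferInstanceAs (Injective (Injective.under M)), rfl⟩

variable [HasExt.{w} C] {S : ShortComplex C}

theorem subsingleton_ext_one_iff_forall_exists_lift (hS : S.ShortExact) [Injective S.X₂] (A : C) :
    Subsingleton (Ext A S.X₁ 1) ↔ ∀ f : A ⟶ S.X₃, ∃ f' : A ⟶ S.X₂, f' ≫ S.g = f := by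
  constructor
  · intro h f
    obtain ⟨y, hy⟩ := Ext.covariant_sequence_exact₃ A hS (Ext.mk₀ f) (zero_add 1) (h.elim _ _)
    obtain ⟨f', rfl⟩ := (Ext.mk₀_bijective A S.X₂).2 y
    rw [Ext.mk₀_comp_mk₀] at hy
    exact ⟨f', (Ext.mk₀_bijective _ _).1 hy⟩
  · intro h
    refine subsingleton_of_forall_eq 0 fun a => ?_
    obtain ⟨y, rfl⟩ := Ext.covariant_sequence_exact₁ A hS a (Ext.eq_zero_of_injective _)
      (zero_add 1)
    obtain ⟨f, rfl⟩ := (Ext.mk₀_bijective A S.X₃).2 y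
    obtain ⟨f', rfl⟩ := h f
    rw [← Ext.mk₀_comp_mk₀, Ext.comp_assoc_of_second_deg_zero,
      ShortComplex.ShortExact.comp_extClass, Ext.comp_zero]

theorem subsingleton_ext_succ_succ_iff (hS : S.ShortExact) [Injective S.X₂] (A : C) (i : ℕ) :
    Subsingleton (Ext A S.X₁ (i + 1 + 1)) ↔ Subsingleton (Ext A S.X₃ (i + 1)) := by
  constructor
  · intro h
    refine subsingleton_of_forall_eq 0 fun a => ?_
    obtain ⟨y, rfl⟩ := Ext.covariant_sequence_exact₃ A hS a rfl (h.elim _ _)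
    rw [Ext.eq_zero_of_injective y, Ext.zero_comp]
  · intro h
    refine subsingleton_of_forall_eq 0 fun a => ?_
    obtain ⟨y, rfl⟩ := Ext.covariant_sequence_exact₁ A hS a (Ext.eq_zero_of_injective _) rfl
    rw [h.elim y 0, Ext.zero_comp]

end DimensionShifting

section Socle

variable {R : Type u} [CommRing R] {l : List R}

theorem exists_linearMap_quotient_ofList_iff {M : Type v} [AddCommGroup M] [Module R M] {m : M} :
    (∃ f : (R ⧸ Ideal.ofList l) →ₗ[R] M, f (Ideal.Quotient.mk _ 1) = m) ↔
      ∀ x ∈ l, x • m = 0 := by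
  constructor
  · rintro ⟨f, rfl⟩ x hx
    have hmk : x • Ideal.Quotient.mk (Ideal.ofList l) 1 = 0 :=
      Ideal.Quotient.eq_zero_iff_mem.2
        (Ideal.mul_mem_right 1 (Ideal.ofList l) (Ideal.subset_span hx))
    rw [← map_smul, hmk, map_zero]
  · intro h
    exact ⟨Submodule.liftQ (Ideal.ofList l) (LinearMap.toSpanSingleton R M m)
      (Ideal.span_le.2 fun x hx => by simpa using h x hx), one_smul R m⟩

theorem linearMap_quotient_ext {I : Ideal R} {M : Type v} [AddCommGroup M] [Module R M]
    {f g : (R ⧸ I) →ₗ[R] M} (h : f (Ideal.Quotient.mk _ 1) = g (Ideal.Quotient.mk _ 1)) : f = g :=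
  Submodule.linearMap_qext I (LinearMap.ext_ring h)

theorem subsingleton_hom_quotient_ofList_iff {M : ModuleCat.{u} R} :
    Subsingleton (ModuleCat.of R (R ⧸ Ideal.ofList l) ⟶ M) ↔
      ∀ m : M, (∀ x ∈ l, x • m = 0) → m = 0 := by
  constructor
  · intro h m hm
    obtain ⟨f, rfl⟩ := exists_linearMap_quotient_ofList_iff.2 hm
    exact DFunLike.congr_fun (congrArg ModuleCat.Hom.hom (h.elim (ModuleCat.ofHom f) 0)) _
  · intro h
    refine subsingleton_of_forall_eq 0 fun f => ModuleCat.hom_ext (linearMap_quotient_ext ?_)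
    exact h _ (exists_linearMap_quotient_ofList_iff.1 ⟨f.hom, rfl⟩)

theorem forall_exists_lift_quotient_ofList_iff {M N : ModuleCat.{u} R} {g : M ⟶ N} :
    (∀ f : ModuleCat.of R (R ⧸ Ideal.ofList l) ⟶ N, ∃ f', f' ≫ g = f) ↔
      ∀ n : N, (∀ x ∈ l, x • n = 0) → ∃ m : M, g.hom m = n ∧ ∀ x ∈ l, x • m = 0 := by
  constructor
  · intro h n hn
    obtain ⟨f, rfl⟩ := exists_linearMap_quotient_ofList_iff.2 hn
    obtain ⟨f', hf'⟩ := h (ModuleCat.ofHom f)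
    exact ⟨f'.hom (Ideal.Quotient.mk _ 1),
      DFunLike.congr_fun (congrArg ModuleCat.Hom.hom hf') _,
      exists_linearMap_quotient_ofList_iff.1 ⟨f'.hom, rfl⟩⟩
  · intro h f
    obtain ⟨m, hm, hlm⟩ := h _ (exists_linearMap_quotient_ofList_iff.1 ⟨f.hom, rfl⟩)
    obtain ⟨f', rfl⟩ := exists_linearMap_quotient_ofList_iff.2 hlm
    exact ⟨ModuleCat.ofHom f', ModuleCat.hom_ext (linearMap_quotient_ext hm)⟩

end Socle

/-! ### Koszul homology and Ext -/

section WeaklyRegular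

open RingTheory.Sequence

variable {R : Type u} [CommRing R] {x : R} {l : List R}

theorem isWeaklyRegular_reverse_cons_iff : IsWeaklyRegular R (x :: l).reverse ↔
    IsWeaklyRegular R l.reverse ∧ ∀ a, x * a ∈ Ideal.ofList l → a ∈ Ideal.ofList l := by
  have h : (Ideal.ofList l.reverse • ⊤ : Ideal R) = Ideal.ofList l := by
    simp [Ideal.ofList]
  rw [List.reverse_cons, isWeaklyRegular_append_iff, h, isWeaklyRegular_singleton_iff,
    isSMulRegular_quotient_iff_mem_of_smul_mem]
  rfl

theorem isWeaklyRegular_reverse_varList {σ : Type v} {L : List σ} (hL : L.Nodup) :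
    IsWeaklyRegular (MvPolynomial σ R) (varList R L).reverse := by
  induction L with
  | nil => exact .nil _ _
  | cons v L ih =>
    obtain ⟨hv, hL⟩ := List.nodup_cons.1 hL
    refine isWeaklyRegular_reverse_cons_iff.2 ⟨ih hL, fun p hp => ?_⟩
    have hspan : Ideal.ofList (varList R L) = Ideal.span (X '' {w | w ∈ L}) := by
      simp only [Ideal.ofList, List.mem_map]
      rfl
    rw [hspan, mem_ideal_span_X_image] at hp ⊢
    intro a ha
    obtain ⟨w, hw, hwa⟩ := hp (Finsupp.single v 1 + a) (by
      rwa [mem_support_iff, coeff_X_mul, ← mem_support_iff])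
    rw [Finsupp.add_apply, Finsupp.single_eq_of_ne (by rintro rfl; exact hv hw), zero_add] at hwa
    exact ⟨w, hw, hwa⟩

end WeaklyRegular

namespace Koszul

section Lift

variable {R : Type u} [CommRing R] {M : Type v} {N : Type w} [AddCommGroup M] [Module R M]
  [AddCommGroup N] [Module R N] {P : Type*} [AddCommGroup P] [Module R P] {x : R} {l : List R}
  {i e : ℤ}

theorem exactAt_cons_of_lt_length
    (h : ∀ i e : ℤ, i < l.length → ExactAt (⊤ : ℤ → AddSubgroup M) l i e)
    (hx : ∀ m : M, (∀ y ∈ l, y • m = 0) → ∃ q : M, x • q = m ∧ ∀ y ∈ l, y • q = 0)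
    (hi : i < (x :: l).length) : ExactAt (⊤ : ℤ → AddSubgroup M) (x :: l) i e := by
  rintro ⟨a, b⟩ ⟨ha, hb⟩ hz
  have had : d l a + x • b = 0 := congrArg Prod.fst hz
  have hbd : d l b = 0 := neg_eq_zero.1 (congrArg Prod.snd hz)
  obtain ⟨b', hb', rfl⟩ := h (i - 1) (e - 1) (by grind) b hb hbd
  have hb'' : b' ∈ piece ⊤ l (i + 1 - 1) (e - 1) := by rwa [sub_add_eq_add_sub] at hb'
  rw [sub_add_cancel] at hb'
  have hmem : a + x • b' ∈ piece ⊤ l i e :=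
    add_mem ha (smul_mem_piece (fun _ _ _ => AddSubgroup.mem_top _) hb')
  have hd : d l (a + x • b') = 0 := by rw [map_add, _root_.map_smul, had]
  obtain hi | rfl := lt_or_eq_of_le (show i ≤ l.length by grind)
  · obtain ⟨a', ha', hda'⟩ := h i e hi _ hmem hd
    refine ⟨((a', -b') : Chain M l × Chain M l), ⟨ha', (piece ⊤ l _ _).neg_mem hb''⟩, ?_⟩
    rw [d_cons, hda', smul_neg, map_neg, neg_neg, add_neg_cancel_right]
  · obtain ⟨m, hm⟩ := mem_piece_length.1 hmem
    obtain ⟨q, rfl, hq⟩ := hx m (d_top_eq_zero_iff.1 (by rw [hm, hd]))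
    refine ⟨((0, top l q - b') : Chain M l × Chain M l),
      ⟨zero_mem _, (piece ⊤ l _ _).sub_mem ?_ hb''⟩, ?_⟩
    · rw [add_sub_cancel_right]
      exact mem_piece_length.2 ⟨q, rfl⟩
    · rw [_root_.map_smul] at hm
      rw [d_cons, smul_sub, hm, map_sub, d_top_eq_zero_iff.2 hq, map_zero, zero_add, zero_sub,
        neg_neg, add_sub_cancel_right]

variable {φ : M →ₗ[R] N} {ψ : N →ₗ[R] P}

theorem gradedShortExact_top (l : List R) (hφ : Function.Injective φ)
    (hψ : Function.Surjective ψ) (hφψ : Function.Exact φ ψ) :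
    GradedShortExact l (⊤ : ℤ → AddSubgroup M) (⊤ : ℤ → AddSubgroup N)
      (⊤ : ℤ → AddSubgroup P) φ ψ where
  injective := hφ
  comp_eq_zero := hφψ.apply_apply_eq_zero
  map_mem_left _ _ _ := AddSubgroup.mem_top _
  map_mem_right _ _ _ := AddSubgroup.mem_top _
  exact _ m _ h := ((hφψ m).1 h).imp fun _ h => ⟨AddSubgroup.mem_top _, h⟩
  surjective _ m _ := (hψ m).imp fun _ h => ⟨AddSubgroup.mem_top _, h⟩
  raisesDegree _ _ _ _ _ := AddSubgroup.mem_top _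

/-- The connecting map from the elements of `P` killed by `l` to the Koszul homology of `M` is the
obstruction to lifting them to elements of `N` killed by `l`. -/
theorem GradedShortExact.exists_lift_of_exactAt
    (S : GradedShortExact l (⊤ : ℤ → AddSubgroup M) (⊤ : ℤ → AddSubgroup N) ⊤ φ ψ)
    (h : ExactAt (⊤ : ℤ → AddSubgroup M) l (l.length - 1) e) {p : P} (hp : ∀ x ∈ l, x • p = 0) :
    ∃ n, ψ n = p ∧ ∀ x ∈ l, x • n = 0 := by
  obtain ⟨n, -, rfl⟩ := S.surjective 0 p (AddSubgroup.mem_top _)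
  have hmem : d l (top l n) ∈ piece ⊤ l (l.length - 1) e :=
    d_mem_piece S.raisesDegree (mem_piece_length.2 ⟨n, rfl⟩)
  obtain ⟨a, ha, hφa⟩ := exists_mem_piece_map_eq_of_map_eq_zero (φ : M →+ N) (ψ : N →+ P) S.exact
    hmem (by rw [map_linear_d, map_top]; exact d_top_eq_zero_iff.2 hp)
  obtain ⟨a', ha', rfl⟩ := h a ha (map_injective (φ : M →+ N) S.injective l (by
    rw [map_linear_d, hφa, d_d, map_zero]))
  rw [sub_add_cancel] at ha'
  obtain ⟨m, rfl⟩ := mem_piece_length.1 ha'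
  refine ⟨n - φ m, by rw [map_sub, S.comp_eq_zero, sub_zero], d_top_eq_zero_iff.1 ?_⟩
  rw [map_sub, map_sub, ← hφa, map_linear_d, map_top]
  exact sub_self _

theorem GradedShortExact.exactAt_of_exists_lift
    (S : GradedShortExact l (⊤ : ℤ → AddSubgroup M) (⊤ : ℤ → AddSubgroup N) ⊤ φ ψ)
    (hN : ExactAt (⊤ : ℤ → AddSubgroup N) l (l.length - 1) e)
    (h : ∀ p : P, (∀ x ∈ l, x • p = 0) → ∃ n, ψ n = p ∧ ∀ x ∈ l, x • n = 0) :
    ExactAt (⊤ : ℤ → AddSubgroup M) l (l.length - 1) e := by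
  intro a ha hda
  obtain ⟨b, hb, hdb⟩ := hN _ (map_mem_piece (φ : M →+ N) S.map_mem_left ha)
    (by rw [← map_linear_d, hda, map_zero])
  rw [sub_add_cancel] at hb ⊢
  obtain ⟨n, rfl⟩ := mem_piece_length.1 hb
  have hψn : d l (top l (ψ n)) = 0 := by
    have htop : map (ψ : N →+ P) l (top l n) = top l (ψ n) := map_top (ψ : N →+ P) n
    rw [← htop, ← map_linear_d, hdb, map_map_eq_zero (φ : M →+ N) (ψ : N →+ P) S.comp_eq_zero]
  obtain ⟨n₀, hn₀, hln₀⟩ := h (ψ n) (d_top_eq_zero_iff.1 hψn)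
  obtain ⟨m, -, hm⟩ := S.exact 0 (n - n₀) (AddSubgroup.mem_top _) (by rw [map_sub, hn₀, sub_self])
  refine ⟨top l m, mem_piece_length.2 ⟨m, rfl⟩, map_injective (φ : M →+ N) S.injective l ?_⟩
  have htop : map (φ : M →+ N) l (top l m) = top l (n - n₀) := by rw [← hm, map_top]; rfl
  rw [map_linear_d, htop, map_sub, map_sub, d_top_eq_zero_iff.2 hln₀, sub_zero, hdb]

end Lift

section Ext

open RingTheory.Sequence

variable {R : Type u} [CommRing R] {l : List R} {i e : ℤ}

/-- If `x` is a nonzerodivisor on `R/(l)`, then it acts surjectively on `Hom(R/(l), Q)`, the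
elements of `Q` killed by `l`. -/
theorem exactAt_of_injective {Q : Type u} [AddCommGroup Q] [Module R Q] [Module.Injective R Q]
    (hl : IsWeaklyRegular R l.reverse) (hi : i < l.length) :
    ExactAt (⊤ : ℤ → AddSubgroup Q) l i e := by
  induction l generalizing i e with
  | nil => exact exactAt_of_neg (by simpa using hi)
  | cons x l ih =>
    obtain ⟨hl, hx⟩ := isWeaklyRegular_reverse_cons_iff.1 hl
    refine exactAt_cons_of_lt_length (fun _ _ => ih hl) (fun m hm => ?_) hi
    obtain ⟨f, rfl⟩ := exists_linearMap_quotient_ofList_iff.2 hm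
    have hinj : Function.Injective (LinearMap.lsmul R (R ⧸ Ideal.ofList l) x) := by
      refine (injective_iff_map_eq_zero _).2 fun a ha => ?_
      obtain ⟨p, rfl⟩ := Ideal.Quotient.mk_surjective a
      exact Ideal.Quotient.eq_zero_iff_mem.2 (hx p (Ideal.Quotient.eq_zero_iff_mem.1 ha))
    obtain ⟨g, hg⟩ := Module.Injective.out _ hinj f
    exact ⟨g (Ideal.Quotient.mk _ 1), by rw [← hg, ← _root_.map_smul]; rfl,
      exists_linearMap_quotient_ofList_iff.1 ⟨g, rfl⟩⟩

/-- Both sides are computed by shifting dimensions along embeddings in injective modules. -/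
theorem subsingleton_ext_iff_exactAt (hl : IsWeaklyRegular R l.reverse) (i : ℕ)
    {M : ModuleCat.{u} R} :
    Subsingleton (Abelian.Ext (ModuleCat.of R (R ⧸ Ideal.ofList l)) M i) ↔
      ExactAt (⊤ : ℤ → AddSubgroup M) l (l.length - i) e := by
  induction i generalizing M with
  | zero =>
    rw [Abelian.Ext.homEquiv₀.subsingleton_congr, subsingleton_hom_quotient_ofList_iff,
      Nat.cast_zero, sub_zero, exactAt_length_iff]
  | succ i ih =>
    obtain ⟨S, hS, hinj, rfl⟩ := exists_shortExact_injective M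
    have hQ : Module.Injective R S.X₂ :=
      Module.injective_module_of_injective_object (inj := hinj) ..
    have hT := gradedShortExact_top l hS.moduleCat_injective_f hS.moduleCat_surjective_g
      ((ShortComplex.ShortExact.moduleCat_exact_iff_function_exact S).1 hS.exact)
    have hexact {j : ℕ} : ExactAt (⊤ : ℤ → AddSubgroup S.X₂) l (l.length - (j + 1 : ℕ)) e :=
      exactAt_of_injective hl (by lia)
    cases i with
    | zero =>
      rw [zero_add, subsingleton_ext_one_iff_forall_exists_lift hS,
        forall_exists_lift_quotient_ofList_iff, Nat.cast_one]
      exact ⟨hT.exactAt_of_exists_lift hexact, fun h _ => hT.exists_lift_of_exactAt h⟩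
    | succ i =>
      rw [subsingleton_ext_succ_succ_iff hS, ih]
      have hsub : (l.length - (i + 1 : ℕ) : ℤ) = l.length - (i + 1 + 1 : ℕ) + 1 := by lia
      rw [hsub]
      refine ⟨fun h => hT.exactAt_left h hexact, fun h => hT.exactAt_right ?_ (hsub ▸ hexact)⟩
      rwa [add_sub_cancel_right]

end Ext

end Koszul

section Depth

open Koszul

section Polynomial

variable {K : Type} [Field K] {σ : Type} {I : Ideal (MvPoly K σ)} {i : ℕ}

theorem natCast_le_depthQ_iff_subsingleton_ext : (i : ℕ∞) ≤ depthQ K σ I ↔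
    ∀ j < i, Subsingleton (Abelian.Ext (ModuleCat.of (MvPoly K σ) (MvPoly K σ ⧸ maxIdeal K σ))
      (ModuleCat.of (MvPoly K σ) (MvPoly K σ ⧸ I)) j) := by
  simp only [depthQ, le_sInf_iff, Set.mem_ofPred_eq, forall_exists_index, and_imp,
    ← subsingleton_derivedExt_iff_subsingleton_ext (R := MvPoly K σ),
    ← not_nontrivial_iff_subsingleton]
  constructor
  · intro h j hj hnt
    exact hj.not_ge (by exact_mod_cast h _ j rfl hnt)
  · rintro h _ j rfl hnt
    exact_mod_cast not_lt.1 fun hj => h j hj hnt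

theorem maxIdeal_eq_ofList {L : List σ} (hL : ∀ v, v ∈ L) :
    maxIdeal K σ = Ideal.ofList (varList K L) := by
  simp [maxIdeal, Ideal.ofList, hL, Set.range]

theorem natCast_le_depthQ_iff_exactAt {L : List σ} (hL : L.Nodup) (hL' : ∀ v, v ∈ L) :
    (i : ℕ∞) ≤ depthQ K σ I ↔
      ∀ t e : ℤ, L.length - i < t → ExactAt (quotientPiece ⊤ I) (varList K L) t e := by
  have htop : quotientPiece ⊤ I = (⊤ : ℤ → AddSubgroup (MvPoly K σ ⧸ I)) := by
    refine eq_top_iff.2 fun e m _ => ?_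
    obtain ⟨p, rfl⟩ := Ideal.Quotient.mk_surjective m
    exact ⟨p, AddSubgroup.mem_top _, rfl⟩
  have hlen : (varList K L).length = L.length := List.length_map _
  rw [natCast_le_depthQ_iff_subsingleton_ext, maxIdeal_eq_ofList hL', htop]
  constructor
  · intro h t e ht
    obtain ht' | ht' := lt_or_ge (L.length : ℤ) t
    · exact exactAt_of_length_lt (hlen ▸ ht')
    · have hj := (subsingleton_ext_iff_exactAt (isWeaklyRegular_reverse_varList hL) _ (e := e)).1
        (h (L.length - t).toNat (by lia))
      rwa [hlen, Int.toNat_of_nonneg (by lia), sub_sub_cancel] at hj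
  · intro h j hj
    rw [subsingleton_ext_iff_exactAt (isWeaklyRegular_reverse_varList hL) j (e := 0)]
    exact h _ _ (by lia)

end Polynomial

variable {K : Type} [Field K] {n : ℕ} {I : Ideal (MvPoly K (Fin n))}

theorem IsMonomialIdeal.depthQ_le_colon_X (hI : IsMonomialIdeal K I) (v : Fin n) :
    depthQ K (Fin n) I ≤ depthQ K (Fin n) (I.colon {X v}) := by
  refine ENat.forall_natCast_le_iff_le.1 fun i hi => ?_
  obtain ⟨L, hL, hL'⟩ := exists_cons_nodup_forall_mem v
  rw [natCast_le_depthQ_iff_exactAt hL hL'] at hi ⊢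
  exact fun t e ht => hI.exactAt_colon_X isVariableGraded_top (List.nodup_cons.1 hL).1
    (hi _ _ (by lia)) (hi _ _ ht) (hi _ _ ht)

end Depth

/-! ### Colon ideals by squarefree monomials -/

namespace IsMonomialIdeal

variable {K : Type} [Field K] {n : ℕ} {I : Ideal (MvPoly K (Fin n))}

theorem colon_prod_X_induction {P : Ideal (MvPoly K (Fin n)) → Prop}
    (hP : ∀ J v, IsMonomialIdeal K J → P J → P (J.colon {X v}))
    (hI : IsMonomialIdeal K I) (hPI : P I) (e : Finset (Fin n)) :
    P (I.colon {∏ i ∈ e, X i}) := by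
  induction e using Finset.induction_on generalizing I with
  | empty => rwa [Finset.prod_empty, show I.colon {1} = I by
      ext p; rw [Submodule.mem_colon_singleton, smul_eq_mul, mul_one]]
  | insert v e hv ih =>
    have hcolon : I.colon {∏ i ∈ insert v e, X i} = (I.colon {X v}).colon {∏ i ∈ e, X i} := by
      ext p
      simp only [Submodule.mem_colon_singleton, smul_eq_mul, Finset.prod_insert hv,
        mul_assoc, mul_comm (X v)]
    exact hcolon ▸ ih (hI.colon_X v) (hP I v hI hPI)

theorem depthQ_le_colon_prod_X (hI : IsMonomialIdeal K I) (e : Finset (Fin n)) :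
    depthQ K (Fin n) I ≤ depthQ K (Fin n) (I.colon {∏ i ∈ e, X i}) :=
  hI.colon_prod_X_induction (P := fun J => depthQ K (Fin n) I ≤ depthQ K (Fin n) J)
    (fun _ v hJ h => h.trans (hJ.depthQ_le_colon_X v)) le_rfl e

theorem cmreg_colon_prod_X_le (hI : IsMonomialIdeal K I) (e : Finset (Fin n)) :
    CMreg K (Fin n) (I.colon {∏ i ∈ e, X i}) ≤ CMreg K (Fin n) I :=
  hI.colon_prod_X_induction (P := fun J => CMreg K (Fin n) J ≤ CMreg K (Fin n) I)
    (fun _ v hJ h => (hJ.cmreg_colon_X_le v).trans h) le_rfl e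

end IsMonomialIdeal

/-! ### Minimal covers and packings -/

namespace Clutter

variable {n : ℕ} {C : Clutter n}

theorem IsCover.exists_isMinCover {s : Finset (Fin n)} (hs : IsCover C s) :
    ∃ c ⊆ s, IsMinCover C c := by
  obtain ⟨c, hc, hmin⟩ := exists_minimal_le_of_wellFoundedLT (IsCover C) s hs
  exact ⟨c, hc, hmin.1, fun d hd hd' => le_antisymm hd (hmin.2 hd' hd)⟩

theorem IsCover.one_le_card_inter {c e : Finset (Fin n)} (hc : IsCover C c) (he : e ∈ C.edges) :
    1 ≤ (c ∩ e).card := by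
  obtain ⟨i, hie, hic⟩ := hc e he
  exact Finset.card_pos.2 ⟨i, Finset.mem_inter.2 ⟨hic, hie⟩⟩

theorem isCover_support_of_mem_coverPolyhedron {x : Fin n → ℕ}
    (hx : (fun i => (x i : ℝ)) ∈ coverPolyhedron C) : IsCover C {i | x i ≠ 0} := by
  intro e he
  have hpos : ∑ i ∈ e, (x i : ℝ) ≠ 0 := (one_pos.trans_le (hx.2 e he)).ne'
  obtain ⟨i, hi, hxi⟩ := Finset.exists_ne_zero_of_sum_ne_zero hpos
  exact ⟨i, hi, by simpa using hxi⟩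

theorem HasMFMC.exists_packing (h : C.HasMFMC) (α : Fin n → ℕ) :
    ∃ y : Finset (Fin n) → ℕ, (∀ i, ∑ e ∈ C.edges with i ∈ e, y e ≤ α i) ∧
      ∃ c, IsMinCover C c ∧ ∑ i ∈ c, α i ≤ ∑ e ∈ C.edges, y e := by
  obtain ⟨x, ⟨hx, -⟩, y, ⟨-, hy, -⟩, hduality⟩ := h α
  obtain ⟨c, hcx, hc⟩ := (isCover_support_of_mem_coverPolyhedron hx).exists_isMinCover
  refine ⟨y, hy, c, hc, ?_⟩
  calc ∑ i ∈ c, α i ≤ ∑ i ∈ c, α i * x i := Finset.sum_le_sum fun i hi =>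
        Nat.le_mul_of_pos_right _ (Nat.pos_of_ne_zero (Finset.mem_filter.1 (hcx hi)).2)
    _ ≤ ∑ i, α i * x i := Finset.sum_le_sum_of_subset (Finset.subset_univ c)
    _ = ∑ e ∈ C.edges, y e := by exact_mod_cast hduality

theorem sum_sum_filter_mem_eq_sum_mul_card_inter {ι : Type*} [DecidableEq ι] (y : Finset ι → ℕ)
    (c : Finset ι) (E : Finset (Finset ι)) :
    ∑ i ∈ c, ∑ e ∈ E with i ∈ e, y e = ∑ e ∈ E, y e * (c ∩ e).card := by
  simp_rw [Finset.sum_filter]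
  rw [Finset.sum_comm]
  refine Finset.sum_congr rfl fun e _ => ?_
  rw [← Finset.sum_filter, Finset.sum_const, Finset.filter_mem_eq_inter, smul_eq_mul, mul_comm]

/-- Complementary slackness for the weight `α = 1`: by unmixedness every minimal cover is optimal,
so any edge in the support of an optimal packing will do. -/
theorem HasMFMC.exists_mem_edges_forall_card_inter_eq_one (h : C.HasMFMC) (hunm : C.Unmixed)
    (hne : C.edges.Nonempty) :
    ∃ e ∈ C.edges, ∀ c, IsMinCover C c → (c ∩ e).card = 1 := by
  obtain ⟨y, hy, c₀, hc₀, hle⟩ := h.exists_packing 1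
  have hpos : 0 < ∑ e ∈ C.edges, y e := by
    obtain ⟨f, hf⟩ := hne
    obtain ⟨i, -, hi⟩ := hc₀.1 f hf
    refine lt_of_lt_of_le ?_ hle
    simpa using Finset.card_pos.2 ⟨i, hi⟩
  obtain ⟨e, he, hye⟩ := Finset.exists_ne_zero_of_sum_ne_zero hpos.ne'
  refine ⟨e, he, fun c hc => ?_⟩
  have hge : ∀ f ∈ C.edges, y f ≤ y f * (c ∩ f).card := fun f hf =>
    Nat.le_mul_of_pos_right _ (hc.1.one_le_card_inter hf)
  have hopt : ∑ f ∈ C.edges, y f * (c ∩ f).card ≤ ∑ f ∈ C.edges, y f := by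
    rw [← sum_sum_filter_mem_eq_sum_mul_card_inter]
    calc ∑ i ∈ c, ∑ f ∈ C.edges with i ∈ f, y f ≤ ∑ i ∈ c, 1 :=
          Finset.sum_le_sum fun i _ => hy i
      _ = ∑ i ∈ c₀, 1 := by simpa using hunm c c₀ hc hc₀
      _ ≤ ∑ f ∈ C.edges, y f := hle
  have hslack : y e = y e * (c ∩ e).card :=
    (Finset.sum_eq_sum_iff_of_le hge).1 (le_antisymm (Finset.sum_le_sum hge) hopt) e he
  exact Nat.eq_of_mul_eq_mul_left (Nat.pos_of_ne_zero hye) (by rw [← hslack, mul_one])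

/-! ### Powers of the edge ideal -/

/-- The exponent vector of the squarefree monomial `x_e`. -/
noncomputable def edgeExponent (e : Finset (Fin n)) : Fin n →₀ ℕ :=
  Finsupp.indicator e fun _ _ => 1

/-- The exponent vectors of weight at least `k` on every minimal cover, that is, the exponents of
the monomials in the `k`-th symbolic power of the edge ideal. -/
def symbolicExponents (C : Clutter n) (k : ℕ) : Set (Fin n →₀ ℕ) :=
  {a | ∀ c, IsMinCover C c → k ≤ ∑ i ∈ c, a i}

theorem sum_edgeExponent (c e : Finset (Fin n)) : ∑ i ∈ c, edgeExponent e i = (c ∩ e).card := by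
  simp [edgeExponent, Finsupp.indicator_apply]

theorem add_edgeExponent_mem_symbolicExponents {k : ℕ} {a : Fin n →₀ ℕ}
    (ha : a ∈ C.symbolicExponents k) {e : Finset (Fin n)} (he : e ∈ C.edges) :
    a + edgeExponent e ∈ C.symbolicExponents (k + 1) := fun c hc => by
  simp only [Finsupp.add_apply, Finset.sum_add_distrib, sum_edgeExponent]
  exact add_le_add (ha c hc) (hc.1.one_le_card_inter he)

theorem isUpperSet_symbolicExponents (C : Clutter n) (k : ℕ) :
    IsUpperSet (C.symbolicExponents k) :=
  fun _ _ hab ha c hc => (ha c hc).trans (Finset.sum_le_sum fun i _ => hab i)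

theorem HasMFMC.exists_sum_smul_edgeExponent_le (h : C.HasMFMC) {k : ℕ} {a : Fin n →₀ ℕ}
    (ha : a ∈ C.symbolicExponents k) :
    ∃ y : Finset (Fin n) → ℕ, k ≤ ∑ e ∈ C.edges, y e ∧
      ∑ e ∈ C.edges, y e • edgeExponent e ≤ a := by
  obtain ⟨y, hy, c, hc, hle⟩ := h.exists_packing a
  refine ⟨y, (ha c hc).trans hle, fun i => le_trans (le_of_eq ?_) (hy i)⟩
  simp [edgeExponent, Finsupp.indicator_apply, Finsupp.finsetSum_apply, Finset.sum_filter]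

variable {K : Type} [Field K]

theorem prod_X_eq_mono_edgeExponent (e : Finset (Fin n)) :
    (∏ i ∈ e, X i : MvPoly K (Fin n)) = mono K (edgeExponent e) := by
  simpa only [pow_one, mono, edgeExponent] using prod_X_pow (R := K) (fun _ => 1) e

theorem prod_X_mem_edgeIdeal {e : Finset (Fin n)} (he : e ∈ C.edges) :
    (∏ i ∈ e, X i : MvPoly K (Fin n)) ∈ edgeIdeal K C :=
  Ideal.subset_span ⟨e, he, rfl⟩

theorem edgeIdeal_pow_le (k : ℕ) :
    edgeIdeal K C ^ k ≤ Ideal.span (mono K '' C.symbolicExponents k) := by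
  induction k with
  | zero =>
    have hone : (1 : MvPoly K (Fin n)) ∈ Ideal.span (mono K '' C.symbolicExponents 0) :=
      Ideal.subset_span ⟨0, fun _ _ => Nat.zero_le _, rfl⟩
    rw [(Ideal.eq_top_iff_one _).2 hone]
    exact le_top
  | succ k ih =>
    rw [pow_succ]
    refine (Ideal.mul_mono_left ih).trans ?_
    rw [edgeIdeal, Ideal.span_mul_span', Ideal.span_le]
    rintro _ ⟨_, ⟨a, ha, rfl⟩, _, ⟨e, he, rfl⟩, rfl⟩
    refine Ideal.subset_span
      ⟨a + edgeExponent e, add_edgeExponent_mem_symbolicExponents ha he, ?_⟩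
    simp only [prod_X_eq_mono_edgeExponent, mono, monomial_mul, mul_one]

theorem mono_sum_smul_edgeExponent_mem (y : Finset (Fin n) → ℕ) :
    mono K (∑ e ∈ C.edges, y e • edgeExponent e) ∈ edgeIdeal K C ^ ∑ e ∈ C.edges, y e := by
  rw [mono, monomial_sum_one, ← Finset.prod_pow_eq_pow_sum]
  refine Ideal.prod_mem_prod fun e he => ?_
  rw [← one_pow (y e), ← monomial_pow, ← mono, ← prod_X_eq_mono_edgeExponent]
  exact Ideal.pow_mem_pow (prod_X_mem_edgeIdeal he) _

theorem HasMFMC.edgeIdeal_pow_eq_span (h : C.HasMFMC) (k : ℕ) :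
    edgeIdeal K C ^ k = Ideal.span (mono K '' C.symbolicExponents k) := by
  refine le_antisymm (edgeIdeal_pow_le k) (Ideal.span_le.2 ?_)
  rintro _ ⟨a, ha, rfl⟩
  obtain ⟨y, hk, hya⟩ := h.exists_sum_smul_edgeExponent_le ha
  obtain ⟨b, rfl⟩ := exists_add_of_le hya
  have hmem := Ideal.mul_mem_right (mono K b) _
    (Ideal.pow_le_pow_right hk (mono_sum_smul_edgeExponent_mem (K := K) (C := C) y))
  rwa [mono, mono, monomial_mul, mul_one] at hmem

theorem HasMFMC.isMonomialIdeal_edgeIdeal_pow (h : C.HasMFMC) (k : ℕ) :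
    IsMonomialIdeal K (edgeIdeal K C ^ k) :=
  ⟨_, h.edgeIdeal_pow_eq_span k⟩

theorem HasMFMC.mem_edgeIdeal_pow_iff (h : C.HasMFMC) (k : ℕ) {p : MvPoly K (Fin n)} :
    p ∈ edgeIdeal K C ^ k ↔ ∀ a ∈ p.support, a ∈ C.symbolicExponents k := by
  rw [h.edgeIdeal_pow_eq_span]
  refine (mem_ideal_span_monomial_image (R := K)).trans (forall₂_congr fun a _ => ?_)
  exact ⟨fun ⟨b, hb, hba⟩ => isUpperSet_symbolicExponents C k hba hb, fun ha => ⟨a, ha, le_rfl⟩⟩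

theorem HasMFMC.edgeIdeal_pow_eq_colon (h : C.HasMFMC) {e : Finset (Fin n)} (he : e ∈ C.edges)
    (hcard : ∀ c, IsMinCover C c → (c ∩ e).card = 1) (k : ℕ) :
    edgeIdeal K C ^ k = (edgeIdeal K C ^ (k + 1)).colon {∏ i ∈ e, X i} := by
  ext p
  rw [Submodule.mem_colon_singleton, smul_eq_mul, mul_comm]
  refine ⟨fun hp => ?_, fun hp => ?_⟩
  · rw [pow_succ']
    exact Ideal.mul_mem_mul (prod_X_mem_edgeIdeal he) hp
  · rw [h.mem_edgeIdeal_pow_iff] at hp ⊢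
    intro a ha c hc
    have hle := hp (edgeExponent e + a) (by
      rwa [prod_X_eq_mono_edgeExponent, mono, mem_support_iff, coeff_monomial_mul, one_mul,
        ← mem_support_iff]) c hc
    simp only [Finsupp.add_apply, Finset.sum_add_distrib, sum_edgeExponent, hcard c hc] at hle
    lia

theorem edgeIdeal_eq_bot (hC : C.edges = ∅) : edgeIdeal K C = ⊥ := by
  rw [edgeIdeal, hC, Finset.coe_empty, Set.image_empty, Ideal.span_empty]

end Clutter

/-- the powers of the edge ideal of an unmixed clutter with the
max-flow min-cut property have non-increasing depth and non-decreasing regularity. -/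
theorem stmt13 (K : Type) [Field K] (n : ℕ) (C : Clutter n)
    (hunm : C.Unmixed) (hmfmc : C.HasMFMC) :
    ∀ k : ℕ, 1 ≤ k →
      depthQ K (Fin n) (Clutter.edgeIdeal K C ^ k) ≥
        depthQ K (Fin n) (Clutter.edgeIdeal K C ^ (k + 1)) ∧
      CMreg K (Fin n) (Clutter.edgeIdeal K C ^ k) ≤
        CMreg K (Fin n) (Clutter.edgeIdeal K C ^ (k + 1)) := by
  intro k hk
  obtain hC | hC := C.edges.eq_empty_or_nonempty
  · rw [Clutter.edgeIdeal_eq_bot hC, ← Ideal.zero_eq_bot, zero_pow (by lia), zero_pow (by lia)]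
    exact ⟨le_rfl, le_rfl⟩
  · obtain ⟨e, he, hcard⟩ := hmfmc.exists_mem_edges_forall_card_inter_eq_one hunm hC
    have hmon := hmfmc.isMonomialIdeal_edgeIdeal_pow (K := K) (k + 1)
    rw [hmfmc.edgeIdeal_pow_eq_colon he hcard k]
    exact ⟨hmon.depthQ_le_colon_prod_X e, hmon.cmreg_colon_prod_X_le e⟩
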